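/- arXiv:math/0204120 — 2 statements merged into one kernel-verified Lean document; each statement's English description precedes it below -/
import Mathlib

section
/- For every cardinal κ > 2^(2^𝔠), where 𝔠 = 2^{ℵ₀} is the cardinality of the continuum, the spaces B_κ^# and (⊕_κ ℤ/3ℤ)^# are not homeomorphic. -/
open scoped Pointwise

/-- The Bohr topology on an abelian group `G`: the initial topology induced by the
family of all group homomorphisms from `G` to the circle group `ℝ/ℤ`. -/
noncomputable def bohrTopology (G : Type*) [AddCommGroup G] : TopologicalSpace G :=
  ⨅ χ : G →+ AddCircle (1 : ℝ), TopologicalSpace.induced χ inferInstance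

/-- Infinite Ramsey theorem for increasing `k`-tuples and finitely many colours. -/
theorem ramsey_tuples {C : Type*} [Finite C] (k : ℕ) : ∀ (col : (Fin k → ℕ) → C),
    ∃ σ : ℕ → ℕ, StrictMono σ ∧ ∃ c, ∀ e : Fin k → ℕ, StrictMono e → col (σ ∘ e) = c := by
  induction k with
  | zero =>
    intro col
    refine ⟨id, strictMono_id, col Fin.elim0, fun e _ => ?_⟩
    congr 1
    exact Subsingleton.elim _ _
  | succ k ih =>
    intro col
    have step : ∀ τ : {τ : ℕ → ℕ // StrictMono τ}, ∃ ρ : {ρ : ℕ → ℕ // StrictMono ρ}, 0 < ρ.1 0 ∧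
        ∃ c, ∀ e : Fin k → ℕ, StrictMono e →
          col (Fin.cons (τ.1 0) ((τ.1 ∘ ρ.1) ∘ e)) = c := by
      intro τ
      obtain ⟨σ, hσ, c, hc⟩ := ih (fun e => col (Fin.cons (τ.1 0) ((τ.1 ∘ Nat.succ) ∘ e)))
      refine ⟨⟨Nat.succ ∘ σ, fun a b h => Nat.succ_lt_succ (hσ h)⟩, Nat.succ_pos _, c, ?_⟩
      intro e he
      exact hc e he
    choose ρ hρ c hc using step
    let t : ℕ → {τ : ℕ → ℕ // StrictMono τ} := fun i =>
      Nat.rec ⟨id, strictMono_id⟩ (fun _ τ => ⟨τ.1 ∘ (ρ τ).1, τ.2.comp (ρ τ).2⟩) i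
    have ht : ∀ i, (t (i+1)).1 = (t i).1 ∘ (ρ (t i)).1 := fun i => rfl
    let a : ℕ → ℕ := fun i => (t i).1 0
    have ha : StrictMono a := by
      apply strictMono_nat_of_lt_succ
      intro i
      change (t i).1 0 < (t (i+1)).1 0
      rw [ht]
      exact (t i).2 (hρ _)
    have hrange : ∀ i m, ∀ x, (t (i+m)).1 x ∈ Set.range (t i).1 := by
      intro i m
      induction m with
      | zero => intro x; exact ⟨x, rfl⟩
      | succ m ihm =>
        intro x
        rw [← add_assoc, ht]
        exact ihm _
    have key : ∀ i (e : Fin k → ℕ), StrictMono e → (∀ j, i < e j) →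
        col (Fin.cons (a i) (a ∘ e)) = c (t i) := by
      intro i e he hi
      have h1 : ∀ j, ∃ x, (t (i+1)).1 x = a (e j) := by
        intro j
        obtain ⟨m, hm⟩ := Nat.exists_eq_add_of_lt (hi j)
        have := hrange (i+1) m 0
        rw [show i + 1 + m = e j by omega] at this
        exact this
      choose e' he' using h1
      have h2 : StrictMono e' := by
        intro x y hxy
        rw [← (t (i+1)).2.lt_iff_lt, he', he']
        exact ha (he hxy)
      rw [← hc (t i) e' h2]
      congr 2
      funext j
      exact (he' j).symm
    obtain ⟨c0, hc0⟩ := Finite.exists_infinite_fiber (fun i => c (t i))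
    have hinf : Set.Infinite ((fun i => c (t i)) ⁻¹' {c0}) := Set.infinite_coe_iff.1 hc0
    refine ⟨fun i => a (Nat.nth (fun i => c (t i) = c0) i), fun x y h =>
      ha (Nat.nth_strictMono hinf h), c0, ?_⟩
    intro e he
    refine Eq.trans ?_ (Nat.nth_mem_of_infinite (p := fun i => c (t i) = c0) hinf (e 0))
    rw [← key _ (fun j => Nat.nth (fun i => c (t i) = c0) (e j.succ))]
    · congr 1
      funext j
      refine Fin.cases ?_ (fun j => ?_) j
      · rfl
      · rfl
    · intro x y h
      exact Nat.nth_strictMono hinf (he (Fin.succ_lt_succ_iff.2 h))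
    · intro j
      exact Nat.nth_strictMono hinf (he (Fin.succ_pos j))

/-- A linear 4-uniform hypergraph which is not `n`-colourable (from Hales-Jewett). -/
theorem exists_hyper (n : ℕ) : ∃ (M : ℕ) (T : Type) (_ : Fintype T) (p : T → Fin 4 → Fin M),
    (∀ l, StrictMono (p l)) ∧
    (∀ l l' i i' s t, s ≠ t → p l i = p l' s → p l i' = p l' t → l = l') ∧
    ∀ C : Fin M → Fin n, ∃ l, ∀ i j, C (p l i) = C (p l j) := by
  classical
  obtain ⟨ι, _, hι⟩ := Combinatorics.Line.exists_mono_in_high_dimension (Fin 4) (Fin n)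
  have : Finite (Combinatorics.Line (Fin 4) ι) :=
    Finite.of_injective (fun l => l.idxFun) (by
      intro l l' h
      cases l; cases l'; simp_all)
  let _ : Fintype (Combinatorics.Line (Fin 4) ι) := Fintype.ofFinite _
  have : Finite (LinearExtension (ι → Fin 4)) := inferInstanceAs (Finite (ι → Fin 4))
  let _ : Fintype (LinearExtension (ι → Fin 4)) := Fintype.ofFinite _
  let en := (Fintype.orderIsoFinOfCardEq (LinearExtension (ι → Fin 4)) rfl).symm
  have eninj : ∀ x y : ι → Fin 4, en (toLinearExtension x) = en (toLinearExtension y) → x = y :=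
    fun x y h => en.injective h
  refine ⟨_, Combinatorics.Line (Fin 4) ι, inferInstance,
    fun l j => en (toLinearExtension (l j)), ?_, ?_, ?_⟩
  · intro l
    refine Monotone.strictMono_of_injective ?_ ?_
    · intro i j hij
      apply en.monotone
      apply toLinearExtension.monotone
      intro k
      rw [Combinatorics.Line.apply_def, Combinatorics.Line.apply_def]
      cases h : l.idxFun k <;> simp [h, hij]
    · intro i j hij
      have h := eninj _ _ hij
      obtain ⟨k, hk⟩ := l.proper
      have := congrFun h k
      rwa [l.apply_none _ _ hk, l.apply_none _ _ hk] at this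
  · intro l l' i i' s t hst h1 h2
    have h1 := eninj _ _ h1
    have h2 := eninj _ _ h2
    have e1 : ∀ k, (l.idxFun k).getD i = (l'.idxFun k).getD s := fun k => congrFun h1 k
    have e2 : ∀ k, (l.idxFun k).getD i' = (l'.idxFun k).getD t := fun k => congrFun h2 k
    have hst' : i = s ∧ i' = t := by
      obtain ⟨k, hk⟩ := l'.proper
      have a1 := e1 k
      have a2 := e2 k
      rw [hk] at a1 a2
      cases h : l.idxFun k with
      | none => simp [h] at a1 a2; exact ⟨a1, a2⟩
      | some v => simp [h] at a1 a2; exact absurd (a1.symm.trans a2) hst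
    have : l.idxFun = l'.idxFun := by
      funext k
      have a1 := e1 k
      have a2 := e2 k
      obtain ⟨rfl, rfl⟩ := hst'
      cases h : l.idxFun k <;> cases h' : l'.idxFun k <;> simp_all
    cases l; cases l'; simp_all
  · intro C
    obtain ⟨l, c, hl⟩ := hι (fun x => C (en (toLinearExtension x)))
    exact ⟨l, fun i j => (hl i).trans (hl j).symm⟩
theorem exists_dual_of_li {K W ι : Type*} [Field K] [AddCommGroup W] [Module K W] {v : ι → W}
    (hv : LinearIndependent K v) (r : ι → K) : ∃ χ : W →ₗ[K] K, ∀ i, χ (v i) = r i := by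
  obtain ⟨χ, hχ⟩ := LinearMap.exists_extend ((Finsupp.linearCombination K r) ∘ₗ (hv.repr : _ →ₗ[K] _))
  refine ⟨χ, fun i => ?_⟩
  have hm : v i ∈ Submodule.span K (Set.range v) := Submodule.subset_span ⟨i, rfl⟩
  have := LinearMap.congr_fun hχ ⟨v i, hm⟩
  simp only [LinearMap.comp_apply, Submodule.subtype_apply] at this
  rw [this]
  have h2 := hv.repr_eq_single i ⟨v i, hm⟩ rfl
  simp [h2]

/-- The embedding used to isolate one edge of the hypergraph. -/
def isoEmb (M : ℕ) (p : Fin 4 → Fin M) (k q : Fin 4 → ℕ) (m : Fin M) : ℕ :=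
  if m = p 0 then (M + 1) * q 0 else if m = p 1 then (M + 1) * q 1 else
  if m = p 2 then (M + 1) * q 2 else if m = p 3 then (M + 1) * q 3 else
  m.1 + (if m < p 0 then 0 else if m < p 1 then (M + 1) * k 0 else
    if m < p 2 then (M + 1) * k 1 else if m < p 3 then (M + 1) * k 2 else (M + 1) * k 3)

set_option maxHeartbeats 1000000 in
theorem isoEmb_strictMono {M : ℕ} {p : Fin 4 → Fin M} (hp : StrictMono p) {k q : Fin 4 → ℕ}
    (h0 : 1 ≤ q 0) (hqk : ∀ j, q j ≤ k j) (h1 : k 0 < q 1) (h2 : k 1 < q 2) (h3 : k 2 < q 3) :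
    StrictMono (isoEmb M p k q) := by
  have p01 : (p 0).1 < (p 1).1 := hp (by decide)
  have p12 : (p 1).1 < (p 2).1 := hp (by decide)
  have p23 : (p 2).1 < (p 3).1 := hp (by decide)
  have a0 : (M + 1) * 1 ≤ (M + 1) * q 0 := Nat.mul_le_mul_left _ h0
  have a1 : (M + 1) * (k 0 + 1) ≤ (M + 1) * q 1 := Nat.mul_le_mul_left _ h1
  have a2 : (M + 1) * (k 1 + 1) ≤ (M + 1) * q 2 := Nat.mul_le_mul_left _ h2
  have a3 : (M + 1) * (k 2 + 1) ≤ (M + 1) * q 3 := Nat.mul_le_mul_left _ h3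
  have b0 : (M + 1) * q 0 ≤ (M + 1) * k 0 := Nat.mul_le_mul_left _ (hqk 0)
  have b1 : (M + 1) * q 1 ≤ (M + 1) * k 1 := Nat.mul_le_mul_left _ (hqk 1)
  have b2 : (M + 1) * q 2 ≤ (M + 1) * k 2 := Nat.mul_le_mul_left _ (hqk 2)
  have b3 : (M + 1) * q 3 ≤ (M + 1) * k 3 := Nat.mul_le_mul_left _ (hqk 3)
  rw [mul_add] at a1 a2 a3
  intro m m' hm
  have hm' : m.1 < m'.1 := hm
  have hM := m.2
  have hM' := m'.2
  unfold isoEmb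
  simp only [Fin.ext_iff, Fin.lt_def]
  generalize (M + 1) * q 0 = Q0 at *
  generalize (M + 1) * q 1 = Q1 at *
  generalize (M + 1) * q 2 = Q2 at *
  generalize (M + 1) * q 3 = Q3 at *
  generalize (M + 1) * k 0 = K0 at *
  generalize (M + 1) * k 1 = K1 at *
  generalize (M + 1) * k 2 = K2 at *
  generalize (M + 1) * k 3 = K3 at *
  generalize (p 0).1 = P0 at *
  generalize (p 1).1 = P1 at *
  generalize (p 2).1 = P2 at *
  generalize (p 3).1 = P3 at *
  clear h0 h1 h2 h3 hqk hm hp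
  have char : ∀ x : ℕ, ∀ v : ℕ, v = (if x = P0 then Q0 else if x = P1 then Q1 else
      if x = P2 then Q2 else if x = P3 then Q3 else
      x + (if x < P0 then 0 else if x < P1 then K0 else
        if x < P2 then K1 else if x < P3 then K2 else K3)) →
      (x < P0 ∧ v = x) ∨ (x = P0 ∧ v = Q0) ∨ (P0 < x ∧ x < P1 ∧ v = x + K0) ∨
      (x = P1 ∧ v = Q1) ∨ (P1 < x ∧ x < P2 ∧ v = x + K1) ∨ (x = P2 ∧ v = Q2) ∨
      (P2 < x ∧ x < P3 ∧ v = x + K2) ∨ (x = P3 ∧ v = Q3) ∨ (P3 < x ∧ v = x + K3) := by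
    intro x v hv
    split_ifs at hv <;> omega
  have c1 := char m.1 _ rfl
  have c2 := char m'.1 _ rfl
  refine lt_of_lt_of_le ?_ le_rfl
  revert c1 c2
  generalize (if m.1 = P0 then Q0 else _) = v
  generalize (if m'.1 = P0 then Q0 else _) = v'
  intro c1 c2
  rcases c1 with c1 | c1 | c1 | c1 | c1 | c1 | c1 | c1 | c1 <;>
  rcases c2 with c2 | c2 | c2 | c2 | c2 | c2 | c2 | c2 | c2 <;> omega

theorem isoEmb_apply {M : ℕ} {p : Fin 4 → Fin M} (hp : StrictMono p) (k q : Fin 4 → ℕ) (j : Fin 4) :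
    isoEmb M p k q (p j) = (M + 1) * q j := by
  unfold isoEmb
  fin_cases j <;> simp [hp.injective.eq_iff]

theorem isoEmb_congr {M : ℕ} {p : Fin 4 → Fin M} {k q q' : Fin 4 → ℕ} {m : Fin M}
    (h : ∀ j, m = p j → q j = q' j) :
    isoEmb M p k q m = isoEmb M p k q' m := by
  unfold isoEmb
  split_ifs with h0 h1 h2 h3
  · rw [h 0 h0]
  · rw [h 1 h1]
  · rw [h 2 h2]
  · rw [h 3 h3]
  all_goals rfl

theorem additivity {W : Type*} [AddCommGroup W] [Module (ZMod 3) W] {M : ℕ} {T : Type} [Fintype T]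
    (p : T → Fin 4 → Fin M) (hp : ∀ l, StrictMono (p l))
    (hlin : ∀ l l' i i' s t, s ≠ t → p l i = p l' s → p l i' = p l' t → l = l')
    (u : (Fin 4 → ℕ) → W) (c : T → ZMod 3) (l0 : T) (hc : c l0 ≠ 0)
    (hrel : ∀ e : Fin M → ℕ, StrictMono e → ∑ l, c l • u (e ∘ p l) = 0)
    (h k : Fin 4 → ℕ) (h0 : 1 ≤ h 0) (hqk : ∀ j, h j ≤ k j) (h1 : k 0 < h 1) (h2 : k 1 < h 2)
    (h3 : k 2 < h 3) (s t : Fin 4) (hst : s ≠ t) :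
    u (fun j => (M + 1) * Function.update (Function.update h s (k s)) t (k t) j)
      - u (fun j => (M + 1) * Function.update h s (k s) j)
      - u (fun j => (M + 1) * Function.update h t (k t) j)
      + u (fun j => (M + 1) * h j) = 0 := by
  classical
  let E := isoEmb M (p l0) k
  have hE : ∀ q : Fin 4 → ℕ, (∀ j, q j = h j ∨ q j = k j) → StrictMono (E q) := by
    intro q hq
    have e0 := hq 0
    have e1 := hq 1
    have e2 := hq 2
    have e3 := hq 3
    have f0 := hqk 0
    have f1 := hqk 1
    have f2 := hqk 2
    have f3 := hqk 3
    refine isoEmb_strictMono (hp l0) ?_ ?_ ?_ ?_ ?_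
    · omega
    · intro j
      rcases hq j with h' | h' <;> rw [h']
      exact hqk j
    · omega
    · omega
    · omega
  have m1 := hrel _ (hE (Function.update (Function.update h s (k s)) t (k t)) (by
    intro j
    simp only [Function.update_apply]
    split_ifs <;> simp_all))
  have m2 := hrel _ (hE (Function.update h s (k s)) (by
    intro j
    simp only [Function.update_apply]
    split_ifs <;> simp_all))
  have m3 := hrel _ (hE (Function.update h t (k t)) (by
    intro j
    simp only [Function.update_apply]
    split_ifs <;> simp_all))
  have m4 := hrel _ (hE h (fun j => Or.inl rfl))
  have tot : ∑ l, c l • (u (E (Function.update (Function.update h s (k s)) t (k t)) ∘ p l)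
      - u (E (Function.update h s (k s)) ∘ p l) - u (E (Function.update h t (k t)) ∘ p l)
      + u (E h ∘ p l)) = 0 := by
    simp only [smul_sub, smul_add, Finset.sum_add_distrib, Finset.sum_sub_distrib, m1, m2, m3, m4]
    simp
  rw [Finset.sum_eq_single l0] at tot
  · have := (smul_eq_zero.1 tot).resolve_left hc
    have hcomp : ∀ q, E q ∘ p l0 = fun j => (M + 1) * q j := by
      intro q
      funext j
      exact isoEmb_apply (hp l0) k q j
    simpa only [hcomp] using this
  · intro l _ hl
    have hd : (∀ i, p l i ≠ p l0 s) ∨ (∀ i, p l i ≠ p l0 t) := by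
      by_contra hcon
      push Not at hcon
      obtain ⟨⟨i, hi⟩, ⟨i', hi'⟩⟩ := hcon
      exact hl (hlin l l0 i i' s t hst hi hi')
    rcases hd with hd | hd
    · have g1 : E (Function.update (Function.update h s (k s)) t (k t)) ∘ p l =
          E (Function.update h t (k t)) ∘ p l := by
        funext i
        apply isoEmb_congr
        intro j hj
        have : j ≠ s := by rintro rfl; exact hd i hj
        simp [Function.update_apply, this]
      have g2 : E (Function.update h s (k s)) ∘ p l = E h ∘ p l := by
        funext i
        apply isoEmb_congr
        intro j hj
        have : j ≠ s := by rintro rfl; exact hd i hj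
        simp [Function.update_apply, this]
      rw [g1, g2]
      simp
    · have g1 : E (Function.update (Function.update h s (k s)) t (k t)) ∘ p l =
          E (Function.update h s (k s)) ∘ p l := by
        funext i
        apply isoEmb_congr
        intro j hj
        have : j ≠ t := by rintro rfl; exact hd i hj
        simp [Function.update_apply, this]
      have g2 : E (Function.update h t (k t)) ∘ p l = E h ∘ p l := by
        funext i
        apply isoEmb_congr
        intro j hj
        have : j ≠ t := by rintro rfl; exact hd i hj
        simp [Function.update_apply, this]
      rw [g1, g2]
      simp
  · simp

/-- The pairing condition on the colours of a quadruple. -/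
def Paired {C : Type*} (q : Fin 4 → C) : Prop :=
  (q 0 = q 1 ∧ q 2 = q 3) ∨ (q 0 = q 2 ∧ q 1 = q 3) ∨ (q 0 = q 3 ∧ q 1 = q 2)

theorem strictMono_quad {a b c d : ℕ} (hab : a < b) (hbc : b < c) (hcd : c < d) :
    StrictMono ![a, b, c, d] := by
  intro i j hij
  fin_cases i <;> fin_cases j <;> simp at hij ⊢ <;> omega

theorem exists_dual_split {W : Type*} [AddCommGroup W] [Module (ZMod 3) W]
    (w : ℕ → W) (hw : ∀ x, {d | w d = x}.Finite) :
    ∃ χ : W →ₗ[ZMod 3] ZMod 3, {d | χ (w d) = 0}.Infinite ∧ {d | χ (w d) = 1}.Infinite := by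
  classical
  have hr : (Set.range w).Infinite := by
    intro hfin
    have : (Set.univ : Set ℕ).Finite := by
      refine (hfin.biUnion (fun x _ => hw x)).subset ?_
      intro d _
      simp
    exact Set.infinite_univ this
  obtain ⟨b, hb, hspan, hli⟩ := exists_linearIndependent (ZMod 3) (Set.range w)
  have hbinf : b.Infinite := by
    intro hfin
    have : Finite (Submodule.span (ZMod 3) b) := by
      have := Module.Finite.span_of_finite (ZMod 3) hfin
      exact Module.finite_of_finite (ZMod 3)
    apply hr
    have h2 : ((Submodule.span (ZMod 3) b : Submodule (ZMod 3) W) : Set W).Finite :=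
      Set.toFinite _
    refine h2.subset ?_
    rw [hspan]
    exact Submodule.subset_span
  have : Infinite b := hbinf.to_subtype
  let j := Infinite.natEmbedding b
  have hli2 : LinearIndependent (ZMod 3) (fun i : ℕ => ((j i : b) : W)) :=
    hli.comp j j.injective
  obtain ⟨χ, hχ⟩ := exists_dual_of_li hli2 (fun i => if i % 2 = 0 then 0 else 1)
  have hpre : ∀ i, ∃ d, w d = (j i : W) := fun i => hb (j i).2
  choose d hd using hpre
  have hdinj : Function.Injective d := by
    intro x y h
    apply j.injective
    apply Subtype.ext
    rw [← hd, ← hd, h]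
  refine ⟨χ, ?_, ?_⟩
  · refine (Set.infinite_range_of_injective (f := fun i => d (2 * i)) ?_).mono ?_
    · intro x y h
      have := hdinj h
      omega
    · rintro _ ⟨i, rfl⟩
      simp [hd, hχ]
  · refine (Set.infinite_range_of_injective (f := fun i => d (2 * i + 1)) ?_).mono ?_
    · intro x y h
      have := hdinj h
      omega
    · rintro _ ⟨i, rfl⟩
      simp only [Set.mem_ofPred_eq, hd, hχ]
      rw [if_neg (by omega)]

theorem exists_infinite_class {C : Type*} [Finite C] (Q : ℕ → C) {X : Set ℕ} (hX : X.Infinite) :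
    ∃ q, {d | d ∈ X ∧ Q d = q}.Infinite := by
  by_contra h
  push Not at h
  have : X ⊆ ⋃ q, {d | d ∈ X ∧ Q d = q} := by
    intro d hd
    simp [hd]
  exact hX ((Set.finite_iUnion (fun q => h q)).subset this)

/-- The endgame: an additive function of increasing quadruples yields a contradiction. -/
theorem endgame {W : Type*} [AddCommGroup W] [Module (ZMod 3) W]
    (v : ℕ → ℕ → ℕ → ℕ → W)
    (hcont : ∀ χ : W →ₗ[ZMod 3] ZMod 3, ∃ (n : ℕ) (P : ℕ → Fin n), ∀ a b c d,
      a < b → b < c → c < d → Paired ![P a, P b, P c, P d] → χ (v a b c d) = 0)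
    (hfib : ∀ x, {d | 2 < d ∧ v 0 1 2 d = x}.Finite)
    (A B C : ℕ → W)
    (hadd : ∀ a b c d, a < b → b < c → c < d → v a b c d = A a + B b + C c + v 0 1 2 d) :
    False := by
  obtain ⟨χ, h0, h1⟩ := exists_dual_split (fun d => v 0 1 2 d) (by
    intro x
    refine ((hfib x).union (Set.finite_Iic 2)).subset ?_
    intro d hd
    by_cases h : 2 < d
    · exact Or.inl ⟨h, hd⟩
    · exact Or.inr (not_lt.1 h))
  obtain ⟨n, P, hP⟩ := hcont χ
  let Q : ℕ → Fin n × ZMod 3 × ZMod 3 × ZMod 3 := fun d => (P d, χ (A d), χ (B d), χ (C d))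
  obtain ⟨⟨p0, a0, b0, c0⟩, hY0⟩ := exists_infinite_class Q h0
  obtain ⟨⟨p1, a1, b1, c1⟩, hY1⟩ := exists_infinite_class Q h1
  have key : ∀ a b c d, a < b → b < c → c < d → Paired ![P a, P b, P c, P d] →
      χ (A a) + χ (B b) + χ (C c) + χ (v 0 1 2 d) = 0 := by
    intro a b c d hab hbc hcd hq
    have := hP a b c d hab hbc hcd hq
    rw [hadd a b c d hab hbc hcd] at this
    simpa using this
  have pick0 : ∀ m, ∃ x, m < x ∧ P x = p0 ∧ χ (A x) = a0 ∧ χ (B x) = b0 ∧ χ (C x) = c0 ∧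
      χ (v 0 1 2 x) = 0 := by
    intro m
    obtain ⟨x, ⟨hx, hx'⟩, hm⟩ := hY0.exists_gt m
    simp only [Q, Prod.mk.injEq] at hx'
    exact ⟨x, hm, hx'.1, hx'.2.1, hx'.2.2.1, hx'.2.2.2, hx⟩
  have pick1 : ∀ m, ∃ x, m < x ∧ P x = p1 ∧ χ (A x) = a1 ∧ χ (B x) = b1 ∧ χ (C x) = c1 ∧
      χ (v 0 1 2 x) = 1 := by
    intro m
    obtain ⟨x, ⟨hx, hx'⟩, hm⟩ := hY1.exists_gt m
    simp only [Q, Prod.mk.injEq] at hx'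
    exact ⟨x, hm, hx'.1, hx'.2.1, hx'.2.2.1, hx'.2.2.2, hx⟩
  obtain ⟨x, -, hx, xa, xb, xc, xd⟩ := pick0 0
  have e1 : a0 + b0 + c0 + 0 = 0 := by
    obtain ⟨y, hxy, hy, ya, yb, yc, yd⟩ := pick0 x
    obtain ⟨z, hyz, hz, za, zb, zc, zd⟩ := pick0 y
    obtain ⟨w, hzw, hw, wa, wb, wc, wd⟩ := pick0 z
    have := key x y z w hxy hyz hzw (by simp [Paired, hx, hy, hz, hw])
    rwa [xa, yb, zc, wd] at this
  have e2 : a0 + b0 + c1 + 1 = 0 := by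
    obtain ⟨y, hxy, hy, ya, yb, yc, yd⟩ := pick0 x
    obtain ⟨z, hyz, hz, za, zb, zc, zd⟩ := pick1 y
    obtain ⟨w, hzw, hw, wa, wb, wc, wd⟩ := pick1 z
    have := key x y z w hxy hyz hzw (by simp [Paired, hx, hy, hz, hw])
    rwa [xa, yb, zc, wd] at this
  have e3 : a0 + b1 + c0 + 1 = 0 := by
    obtain ⟨y, hxy, hy, ya, yb, yc, yd⟩ := pick1 x
    obtain ⟨z, hyz, hz, za, zb, zc, zd⟩ := pick0 y
    obtain ⟨w, hzw, hw, wa, wb, wc, wd⟩ := pick1 z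
    have := key x y z w hxy hyz hzw (by simp [Paired, hx, hy, hz, hw])
    rwa [xa, yb, zc, wd] at this
  have e4 : a0 + b1 + c1 + 0 = 0 := by
    obtain ⟨y, hxy, hy, ya, yb, yc, yd⟩ := pick1 x
    obtain ⟨z, hyz, hz, za, zb, zc, zd⟩ := pick1 y
    obtain ⟨w, hzw, hw, wa, wb, wc, wd⟩ := pick0 z
    have := key x y z w hxy hyz hzw (by simp [Paired, hx, hy, hz, hw])
    rwa [xa, yb, zc, wd] at this
  have e5 : (2 : ZMod 3) = 0 := by linear_combination e2 + e3 - e1 - e4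
  exact absurd e5 (by decide)

theorem core {W : Type*} [AddCommGroup W] [Module (ZMod 3) W] {M : ℕ} {T : Type} [Fintype T]
    (p : T → Fin 4 → Fin M) (hp : ∀ l, StrictMono (p l))
    (hlin : ∀ l l' i i' s t, s ≠ t → p l i = p l' s → p l i' = p l' t → l = l')
    (u : (Fin 4 → ℕ) → W)
    (hcont : ∀ χ : W →ₗ[ZMod 3] ZMod 3, ∃ (n : ℕ) (P : ℕ → Fin n), ∀ h : Fin 4 → ℕ,
      StrictMono h → Paired (P ∘ h) → χ (u h) = 0)
    (hfib : ∀ x, {h | StrictMono h ∧ u h = x}.Finite)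
    (hdep : ∀ e : Fin M → ℕ, StrictMono e →
      ¬ LinearIndependent (ZMod 3) (fun l => u (e ∘ p l))) : False := by
  classical
  have hdep' : ∀ e : Fin M → ℕ, ∃ c : T → ZMod 3, StrictMono e →
      (∑ l, c l • u (e ∘ p l) = 0 ∧ ∃ l, c l ≠ 0) := by
    intro e
    by_cases he : StrictMono e
    · obtain ⟨c, hc, l, hl⟩ := Fintype.not_linearIndependent_iff.1 (hdep e he)
      exact ⟨c, fun _ => ⟨hc, l, hl⟩⟩
    · exact ⟨0, fun h => absurd h he⟩
  choose col hcol using hdep'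
  obtain ⟨σ, hσ, c, hc⟩ := ramsey_tuples M col
  obtain ⟨l0, hl0⟩ : ∃ l, c l ≠ 0 := by
    have := hcol (σ ∘ (fun i : Fin M => i.1)) (hσ.comp (fun i j h => h))
    rw [hc _ (fun i j h => h)] at this
    exact this.2
  have hrel : ∀ e : Fin M → ℕ, StrictMono e → ∑ l, c l • u (σ ∘ (e ∘ p l)) = 0 := by
    intro e he
    have := (hcol (σ ∘ e) (hσ.comp he)).1
    rw [hc e he] at this
    exact this
  have hadd := additivity p hp hlin (fun h => u (σ ∘ h)) c l0 hl0 hrel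
  let ρ : ℕ → ℕ := fun a => σ ((M + 1) * (a + 1))
  have hρ : StrictMono ρ := fun a b h =>
    hσ (Nat.mul_lt_mul_of_pos_left (Nat.succ_lt_succ h) (Nat.succ_pos M))
  let v : ℕ → ℕ → ℕ → ℕ → W := fun a b c d => u ![ρ a, ρ b, ρ c, ρ d]
  have conv : ∀ (q : Fin 4 → ℕ) (a b c d : ℕ), q 0 = a + 1 → q 1 = b + 1 → q 2 = c + 1 →
      q 3 = d + 1 → u (σ ∘ fun j => (M + 1) * q j) = v a b c d := by
    intro q a b c d h0 h1 h2 h3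
    change _ = u ![ρ a, ρ b, ρ c, ρ d]
    congr 1
    funext j
    fin_cases j <;> simp [ρ, h0, h1, h2, h3]
  have D : ∀ a b c d a' b' c' d', a' ≤ a → a < b' → b' ≤ b → b < c' → c' ≤ c → c < d' → d' ≤ d →
      (v a b c' d' - v a b' c' d' - v a' b c' d' + v a' b' c' d' = 0) ∧
      (v a b' c d' - v a b' c' d' - v a' b' c d' + v a' b' c' d' = 0) ∧
      (v a b' c' d - v a b' c' d' - v a' b' c' d + v a' b' c' d' = 0) ∧
      (v a' b c d' - v a' b c' d' - v a' b' c d' + v a' b' c' d' = 0) ∧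
      (v a' b c' d - v a' b c' d' - v a' b' c' d + v a' b' c' d' = 0) ∧
      (v a' b' c d - v a' b' c d' - v a' b' c' d + v a' b' c' d' = 0) := by
    intro a b c d a' b' c' d' h1 h2 h3 h4 h5 h6 h7
    have := hadd ![a' + 1, b' + 1, c' + 1, d' + 1] ![a + 1, b + 1, c + 1, d + 1] (by simp)
      (by intro j; fin_cases j <;> simp <;> omega) (by simp; omega) (by simp; omega)
      (by simp; omega)
    refine ⟨?_, ?_, ?_, ?_, ?_, ?_⟩
    · rw [← this 0 1 (by decide)]
      congr 1
      · congr 1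
        · congr 1
          all_goals (symm; apply conv <;> simp)
        · symm; apply conv <;> simp
      · symm; apply conv <;> simp
    · rw [← this 0 2 (by decide)]
      congr 1
      · congr 1
        · congr 1
          all_goals (symm; apply conv <;> simp)
        · symm; apply conv <;> simp
      · symm; apply conv <;> simp
    · rw [← this 0 3 (by decide)]
      congr 1
      · congr 1
        · congr 1
          all_goals (symm; apply conv <;> simp)
        · symm; apply conv <;> simp
      · symm; apply conv <;> simp
    · rw [← this 1 2 (by decide)]
      congr 1
      · congr 1
        · congr 1
          all_goals (symm; apply conv <;> simp)
        · symm; apply conv <;> simp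
      · symm; apply conv <;> simp
    · rw [← this 1 3 (by decide)]
      congr 1
      · congr 1
        · congr 1
          all_goals (symm; apply conv <;> simp)
        · symm; apply conv <;> simp
      · symm; apply conv <;> simp
    · rw [← this 2 3 (by decide)]
      congr 1
      · congr 1
        · congr 1
          all_goals (symm; apply conv <;> simp)
        · symm; apply conv <;> simp
      · symm; apply conv <;> simp
  refine endgame v ?_ ?_ (fun a => v a (a+1) (a+2) (a+3) - v 0 (a+1) (a+2) (a+3))
    (fun b => v 0 b (b+1) (b+2) - v 0 1 (b+1) (b+2)) (fun c => v 0 1 c (c+1) - v 0 1 2 (c+1)) ?_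
  · intro χ
    obtain ⟨n, P, hP⟩ := hcont χ
    refine ⟨n, fun x => P (ρ x), fun a b c d hab hbc hcd hq => ?_⟩
    exact hP _ (strictMono_quad (hρ hab) (hρ hbc) (hρ hcd)) hq
  · intro x
    refine Set.Finite.of_finite_image (f := fun d => ![ρ 0, ρ 1, ρ 2, ρ d]) ?_ ?_
    · refine (hfib x).subset ?_
      rintro _ ⟨d, ⟨hd, hx⟩, rfl⟩
      exact ⟨strictMono_quad (hρ (by norm_num)) (hρ (by norm_num)) (hρ hd), hx⟩
    · intro d _ d' _ h
      exact hρ.injective (congrFun h 3)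
  · intro a b c d hab hbc hcd
    have s1 := (D a b c d 0 (a+1) c d (by omega) (by omega) (by omega) (by omega) (by omega)
      (by omega) (by omega)).1
    have s2 := (D a (a+1) c d 0 (a+1) (a+2) d (by omega) (by omega) (by omega) (by omega)
      (by omega) (by omega) (by omega)).2.1
    have s3 := (D a (a+1) (a+2) d 0 (a+1) (a+2) (a+3) (by omega) (by omega) (by omega) (by omega)
      (by omega) (by omega) (by omega)).2.2.1
    have s4 := (D 0 b c d 0 1 (b+1) d (by omega) (by omega) (by omega) (by omega) (by omega)
      (by omega) (by omega)).2.2.2.1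
    have s5 := (D 0 b (b+1) d 0 1 (b+1) (b+2) (by omega) (by omega) (by omega) (by omega)
      (by omega) (by omega) (by omega)).2.2.2.2.1
    have s6 := (D 0 1 c d 0 1 2 (c+1) (by omega) (by omega) (by omega) (by omega) (by omega)
      (by omega) (by omega)).2.2.2.2.2
    rw [← sub_eq_zero]
    have tot : ∀ x1 x2 x3 x4 x5 x6 : W, x1 = 0 → x2 = 0 → x3 = 0 → x4 = 0 → x5 = 0 → x6 = 0 →
        x1 + x2 + x3 + x4 + x5 + x6 = 0 := by
      intro x1 x2 x3 x4 x5 x6 e1 e2 e3 e4 e5 e6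
      simp [e1, e2, e3, e4, e5, e6]
    rw [← tot _ _ _ _ _ _ s1 s2 s3 s4 s5 s6]
    abel

/-- From the Bohr-type continuity at `0` to a contradiction. -/
theorem no_function {κ : Type*} (u : (Fin 4 → ℕ) → (κ →₀ ZMod 3))
    (hcont : ∀ χ : (κ →₀ ZMod 3) →ₗ[ZMod 3] ZMod 3, ∃ (n : ℕ) (P : ℕ → Fin n), ∀ h : Fin 4 → ℕ,
      StrictMono h → Paired (P ∘ h) → χ (u h) = 0)
    (hfib : ∀ x, {h | StrictMono h ∧ u h = x}.Finite) : False := by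
  classical
  choose M T hT p hp hlin hcol using exists_hyper
  let K : ℕ → Set (κ → ZMod 3) := fun n => {c | ∀ e : Fin (M n) → ℕ, StrictMono e →
    ∃ l : T n, Finsupp.linearCombination (ZMod 3) c (u (e ∘ p n l)) = 0}
  have hclosed : ∀ n, IsClosed (K n) := by
    intro n
    have : K n = ⋂ (e : Fin (M n) → ℕ) (_ : StrictMono e), ⋃ l : T n,
        {c | Finsupp.linearCombination (ZMod 3) c (u (e ∘ p n l)) = 0} := by
      ext c
      simp [K]
    rw [this]
    refine isClosed_iInter fun e => isClosed_iInter fun _ => isClosed_iUnion_of_finite fun l => ?_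
    refine isClosed_eq ?_ continuous_const
    simp only [Finsupp.linearCombination_apply, Finsupp.sum]
    fun_prop
  have hunion : ⋃ n, K n = Set.univ := by
    refine Set.eq_univ_of_forall fun c => ?_
    obtain ⟨n, P, hP⟩ := hcont (Finsupp.linearCombination (ZMod 3) c)
    refine Set.mem_iUnion.2 ⟨n, fun e he => ?_⟩
    obtain ⟨l, hl⟩ := hcol n (fun i => P (e i))
    exact ⟨l, hP _ (he.comp (hp n l)) (Or.inl ⟨hl 0 1, hl 2 3⟩)⟩
  obtain ⟨n, c0, hc0⟩ := nonempty_interior_of_iUnion_of_closed hclosed hunion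
  obtain ⟨I, U, hU, hsub⟩ := isOpen_pi_iff.1 isOpen_interior c0 hc0
  have hK : ∀ c : κ → ZMod 3, (∀ i ∈ I, c i = c0 i) → c ∈ K n := by
    intro c hc
    apply interior_subset
    apply hsub
    intro i hi
    rw [hc i hi]
    exact (hU i hi).2
  let S : Submodule (ZMod 3) (κ →₀ ZMod 3) :=
    Submodule.span (ZMod 3) ((fun i => Finsupp.single i (1 : ZMod 3)) '' (I : Set κ))
  have hS : Finite S := by
    have := Module.Finite.span_of_finite (ZMod 3)
      ((I.finite_toSet).image (fun i => Finsupp.single i (1 : ZMod 3)))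
    exact Module.finite_of_finite (ZMod 3)
  refine core (W := (κ →₀ ZMod 3) ⧸ S) (p n) (hp n) (hlin n) (fun h => S.mkQ (u h)) ?_ ?_ ?_
  · intro χ
    exact hcont (χ ∘ₗ S.mkQ)
  · intro x
    have hfin : (S.mkQ ⁻¹' {x}).Finite := by
      obtain ⟨y, rfl⟩ := S.mkQ_surjective x
      refine ((Set.toFinite (S : Set (κ →₀ ZMod 3))).image (fun s => y + s)).subset ?_
      intro z hz
      refine ⟨z - y, ?_, by simp⟩
      have : S.mkQ z = S.mkQ y := hz
      exact (Submodule.Quotient.eq S).1 this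
    refine (hfin.biUnion (fun y _ => hfib y)).subset ?_
    intro h hh
    simp only [Set.mem_iUnion]
    exact ⟨u h, hh.2, hh.1, rfl⟩
  · intro e he hli
    obtain ⟨χ, hχ⟩ := exists_dual_of_li hli
      (fun l => 1 - Finsupp.linearCombination (ZMod 3) c0 (u (e ∘ p n l)))
    have hmem := hK (fun i => c0 i + χ (S.mkQ (Finsupp.single i 1))) (by
      intro i hi
      have : S.mkQ (Finsupp.single i (1 : ZMod 3)) = 0 := by
        rw [Submodule.mkQ_apply, Submodule.Quotient.mk_eq_zero]
        exact Submodule.subset_span ⟨i, hi, rfl⟩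
      rw [this]
      simp)
    obtain ⟨l, hl⟩ := hmem e he
    have hlc : Finsupp.linearCombination (ZMod 3) (fun i => c0 i + χ (S.mkQ (Finsupp.single i 1)))
        = Finsupp.linearCombination (ZMod 3) c0 + χ ∘ₗ S.mkQ := by
      apply Finsupp.lhom_ext'
      intro i
      apply LinearMap.ext_ring
      simp
    rw [hlc] at hl
    simp only [LinearMap.add_apply, LinearMap.comp_apply] at hl
    rw [hχ] at hl
    simp at hl

section bohr

theorem bohr_char_continuous (G : Type*) [AddCommGroup G] (χ : G →+ AddCircle (1 : ℝ)) :
    @Continuous _ _ (bohrTopology G) _ χ := by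
  refine continuous_iff_le_induced.2 ?_
  exact iInf_le _ χ

theorem bohr_nhds {G : Type*} [AddCommGroup G] {O : Set G} (hO : @IsOpen G (bohrTopology G) O)
    (h0 : (0 : G) ∈ O) : ∃ F : Set (G →+ AddCircle (1 : ℝ)), F.Finite ∧
      ∀ x, (∀ ψ ∈ F, ψ x = 0) → x ∈ O := by
  have hn : O ∈ @nhds G (bohrTopology G) 0 := by
    let _ := bohrTopology G
    exact IsOpen.mem_nhds hO h0
  unfold bohrTopology at hn
  rw [nhds_iInf, Filter.mem_iInf] at hn
  obtain ⟨F, hF, V, hV, rfl⟩ := hn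
  refine ⟨F, hF, fun x hx => ?_⟩
  simp only [Set.mem_iInter]
  intro ψ
  have := hV ψ
  rw [nhds_induced, Filter.mem_comap] at this
  obtain ⟨t, ht, hts⟩ := this
  apply hts
  have h2 := mem_of_mem_nhds ht
  rw [map_zero] at h2
  change (ψ : G →+ AddCircle (1 : ℝ)) x ∈ t
  rw [hx ψ ψ.2]
  exact h2

theorem exists_zmod3_char : ∃ j : ZMod 3 →+ AddCircle (1 : ℝ), Function.Injective j := by
  exact ⟨ZMod.toAddCircle, ZMod.toAddCircle_injective 3⟩

end bohr

/-- For every `κ > 2^(2^𝔠)`, the spaces `B_κ^#` and `(⊕_κ ℤ/3ℤ)^#` are not homeomorphic. -/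
theorem bohr_boolean_vs_Z3_not_homeomorphic (κ : Type*)
    (hκ : (2 : Cardinal) ^ ((2 : Cardinal) ^ Cardinal.continuum) < Cardinal.mk κ) :
    letI := bohrTopology (κ →₀ ZMod 2)
    letI := bohrTopology (κ →₀ ZMod 3)
    IsEmpty ((κ →₀ ZMod 2) ≃ₜ (κ →₀ ZMod 3)) := by
  classical
  letI t2 := bohrTopology (κ →₀ ZMod 2)
  letI t3 := bohrTopology (κ →₀ ZMod 3)
  refine ⟨fun Φ => ?_⟩
  have hinf : Infinite κ := by
    rw [Cardinal.infinite_iff]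
    refine le_trans ?_ hκ.le
    refine Cardinal.aleph0_le_continuum.trans ?_
    exact (Cardinal.cantor _).le.trans (Cardinal.cantor _).le
  let ε := Infinite.natEmbedding κ
  let b : (Fin 4 → ℕ) → (κ →₀ ZMod 2) := fun h => ∑ i, Finsupp.single (ε (h i)) 1
  refine no_function (κ := κ) (fun h => Φ (b h) - Φ 0) ?_ ?_
  · intro χ
    obtain ⟨j, hj⟩ := exists_zmod3_char
    let χ' : (κ →₀ ZMod 3) →+ AddCircle (1 : ℝ) := j.comp χ.toAddMonoidHom
    have hχ' : Continuous χ' := bohr_char_continuous _ χ'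
    let O : Set (κ →₀ ZMod 2) := {x | χ' (Φ x) ∈ (j '' {z | z ≠ χ (Φ 0)})ᶜ}
    have hO : IsOpen O :=
      ((Set.toFinite (j '' {z | z ≠ χ (Φ 0)})).isClosed.isOpen_compl).preimage
        (hχ'.comp Φ.continuous)
    have hO0 : (0 : κ →₀ ZMod 2) ∈ O := by
      rintro ⟨z, hz, hz'⟩
      exact hz (hj hz')
    obtain ⟨F, hF, hFO⟩ := bohr_nhds hO hO0
    have : Finite F := hF
    have htor : Finite {z : AddCircle (1 : ℝ) // 2 • z = 0} :=
      AddCircle.finite_torsion (1 : ℝ) (n := 2) (by norm_num)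
    have two : ∀ (ψ : (κ →₀ ZMod 2) →+ AddCircle (1 : ℝ)) x, 2 • ψ x = 0 := by
      intro ψ x
      rw [← map_nsmul, show 2 • x = 0 by
        ext i
        have : ∀ z : ZMod 2, 2 • z = 0 := by decide
        simp [this], map_zero]
    let P' : ℕ → (F → {z : AddCircle (1 : ℝ) // 2 • z = 0}) :=
      fun a ψ => ⟨ψ.1 (Finsupp.single (ε a) 1), two _ _⟩
    obtain ⟨n, ⟨en⟩⟩ := Finite.exists_equiv_fin (F → {z : AddCircle (1 : ℝ) // 2 • z = 0})
    refine ⟨n, fun a => en (P' a), fun h hh hq => ?_⟩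
    have hmem : b h ∈ O := by
      apply hFO
      intro ψ hψ
      have tr : ∀ x y, en (P' (h x)) = en (P' (h y)) →
          ψ (Finsupp.single (ε (h x)) 1) = ψ (Finsupp.single (ε (h y)) 1) := by
        intro x y hxy
        have := congrFun (en.injective hxy) ⟨ψ, hψ⟩
        exact congrArg Subtype.val this
      have t0 := two ψ (Finsupp.single (ε (h 0)) 1)
      have t1 := two ψ (Finsupp.single (ε (h 1)) 1)
      have t2 := two ψ (Finsupp.single (ε (h 2)) 1)
      have t3 := two ψ (Finsupp.single (ε (h 3)) 1)
      simp only [b, Fin.sum_univ_four, map_add]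
      rw [two_nsmul] at t0 t1 t2 t3
      rcases hq with ⟨h1, h2⟩ | ⟨h1, h2⟩ | ⟨h1, h2⟩
      · rw [← tr _ _ h1, ← tr _ _ h2, t0, zero_add, t2]
      · rw [← tr _ _ h1, ← tr _ _ h2, add_right_comm,
          add_assoc (ψ (Finsupp.single (ε (h 0)) 1)), t1, add_zero, t0]
      · rw [← tr _ _ h1, ← tr _ _ h2, add_assoc (ψ (Finsupp.single (ε (h 0)) 1)), t1, add_zero, t0]
    have : χ (Φ (b h)) = χ (Φ 0) := by
      by_contra hne
      exact hmem ⟨χ (Φ (b h)), hne, rfl⟩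
    rw [map_sub, this, sub_self]
  · intro x
    have : {h | StrictMono h ∧ Φ (b h) - Φ 0 = x}.Subsingleton := by
      rintro h ⟨hh, hx⟩ h' ⟨hh', hx'⟩
      have e1 : b h = b h' := Φ.injective (sub_left_injective (hx.trans hx'.symm))
      have hval : ∀ h : Fin 4 → ℕ, StrictMono h → ∀ a, b h (ε a) ≠ 0 ↔ a ∈ Set.range h := by
        intro h hh a
        simp only [b, Finsupp.finsetSum_apply, Finsupp.single_apply, ε.injective.eq_iff]
        constructor
        · intro hne
          obtain ⟨i, _, hi⟩ := Finset.exists_ne_zero_of_sum_ne_zero hne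
          refine ⟨i, ?_⟩
          by_contra hia
          simp [hia] at hi
        · rintro ⟨i, rfl⟩
          simp [hh.injective.eq_iff]
      refine (StrictMono.range_inj hh hh').1 ?_
      ext a
      rw [← hval h hh, ← hval h' hh', e1]
    exact this.finite
end

section
/- Let G and H be abelian groups such that G contains a subgroup of exponent 2 of cardinality greater than 2^(2^𝔠), where 𝔠 = 2^{ℵ₀} is the cardinality of the continuum, and such that H contains no infinite subgroup of exponent 2. Then there exists no continuous finite-to-one map f : G^# → H^# (i.e., no continuous map all of whose fibers f⁻¹(y) are finite). -/
open scoped Pointwise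

namespace BohrAux

universe u w

set_option linter.deprecated false

section part1
open Cardinal Set

section ER
variable {W L : Type u} [LinearOrder W] [WellFoundedLT W] [LinearOrder L] [WellFoundedLT L]

/-- candidates for the next element of the end-homogeneous sequence below `q` -/
def erCand {n : ℕ} (col : (Fin (n+1) → W) → ℕ) (q : W) (i : L) (h : ∀ j, j < i → W) : Set W :=
  {w | (∀ j (hj : j < i), h j hj < w) ∧ ∀ x : Fin n → Iio i,
    col (Fin.snoc (α := fun _ => W) (fun k => h (x k).1 (x k).2) w) =
    col (Fin.snoc (α := fun _ => W) (fun k => h (x k).1 (x k).2) q)}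

open Classical in
noncomputable def erSeq {n : ℕ} (col : (Fin (n+1) → W) → ℕ) (q : W) : L → W :=
  (wellFounded_lt (α := L)).fix fun i h =>
    if hne : (erCand col q i h).Nonempty then (wellFounded_lt (α := W)).min _ hne else q

open Classical in
theorem erSeq_eq {n : ℕ} (col : (Fin (n+1) → W) → ℕ) (q : W) (i : L) :
    erSeq col q i = if hne : (erCand col q i (fun j _ => erSeq col q j)).Nonempty then
      (wellFounded_lt (α := W)).min _ hne else q := by
  unfold erSeq
  rw [WellFounded.fix_eq]

theorem er_step {n : ℕ} (c : Cardinal.{u}) (hc : ℵ₀ ≤ c) (hL : ∀ i : L, #(Iio i) ≤ c)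
    (hL' : #L ≤ 2 ^ c) (hW : 2 ^ c < #W) (col : (Fin (n+1) → W) → ℕ) :
    ∃ g : L → W, StrictMono g ∧ ∃ c' : (Fin n → L) → ℕ, ∀ x : Fin (n+1) → L, StrictMono x →
      col (g ∘ x) = c' (Fin.init x) := by
  have hmem : ∀ (q : W) (i : L), (∀ j < i, erSeq col q j < q) →
      erSeq col q i ∈ erCand col q i (fun j _ => erSeq col q j) ∧ erSeq col q i ≤ q := by
    intro q i h
    have hq : q ∈ erCand col q i (fun j _ => erSeq col q j) := ⟨h, fun x => rfl⟩
    have hne : (erCand col q i (fun j _ => erSeq col q j)).Nonempty := ⟨q, hq⟩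
    have e := erSeq_eq col q i
    rw [dif_pos hne] at e
    rw [e]
    exact ⟨WellFounded.min_mem _ _ hne, not_lt.1 (WellFounded.not_lt_min _ _ hq)⟩
  by_cases H : ∃ q : W, ∀ i : L, erSeq col q i < q
  · obtain ⟨q, hq⟩ := H
    refine ⟨erSeq col q, ?_, fun x => col (Fin.snoc (α := fun _ => W) (fun k => erSeq col q (x k)) q), ?_⟩
    · intro j i hji
      exact (hmem q i (fun j _ => hq j)).1.1 j hji
    · intro x hx
      have := (hmem q (x (Fin.last n)) (fun j _ => hq j)).1.2
        (fun k => ⟨x k.castSucc, hx (Fin.castSucc_lt_last k)⟩)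
      simp only at this
      refine Eq.trans ?_ this
      congr 1
      funext k
      refine Fin.lastCases ?_ (fun k => ?_) k <;> simp
  · exfalso
    push Not at H
    have H2 : ∀ q : W, ∃ i : L, (∀ j < i, erSeq col q j < q) ∧ erSeq col q i = q := by
      intro q
      have hne : {i : L | q ≤ erSeq col q i}.Nonempty := H q
      have h1 := WellFounded.min_mem (wellFounded_lt (α := L)) _ hne
      have h2 : ∀ j < (wellFounded_lt (α := L)).min _ hne, erSeq col q j < q := by
        intro j hj
        by_contra hcon
        exact WellFounded.not_lt_min (wellFounded_lt (α := L)) (s := {i : L | q ≤ erSeq col q i}) (not_lt.1 hcon) hj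
      exact ⟨_, h2, le_antisymm (hmem q _ h2).2 h1⟩
    choose I hI1 hI2 using H2
    let Φ : W → Σ i : L, ((Fin n → Iio i) → ℕ) := fun q => ⟨I q, fun x =>
      col (Fin.snoc (α := fun _ => W) (fun k => erSeq col q (x k).1) q)⟩
    have key : ∀ (q q' : W) (i : L), (∀ x : Fin n → Iio i,
      col (Fin.snoc (α := fun _ => W) (fun k => erSeq col q (x k).1) q) =
      col (Fin.snoc (α := fun _ => W) (fun k => erSeq col q' (x k).1) q')) →
      (∀ j < i, erSeq col q j < q) → (∀ j < i, erSeq col q' j < q') →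
      ∀ j ≤ i, erSeq col q j = erSeq col q' j := by
      intro q q' i h1 h2 h2' j
      induction j using (wellFounded_lt (α := L)).induction with
      | _ j ih =>
        intro hj
        have hS : erCand col q j (fun j _ => erSeq col q j) =
            erCand col q' j (fun j _ => erSeq col q' j) := by
          ext w
          have e1 : ∀ k < j, erSeq col q k = erSeq col q' k := fun k hk => ih k hk (hk.le.trans hj)
          have e2 : ∀ x : Fin n → Iio j, (fun k => erSeq col q (x k).1) = (fun k => erSeq col q' (x k).1) :=
            fun x => funext fun k => e1 _ (x k).2
          have e3 : ∀ x : Fin n → Iio j, col (Fin.snoc (α := fun _ => W) (fun k => erSeq col q (x k).1) q) =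
              col (Fin.snoc (α := fun _ => W) (fun k => erSeq col q' (x k).1) q') :=
            fun x => h1 (fun k => ⟨(x k).1, lt_of_lt_of_le (x k).2 hj⟩)
          unfold erCand
          simp only [mem_ofPred_eq]
          refine and_congr (forall_congr' fun k => forall_congr' fun hk => by rw [e1 k hk]) 
            (forall_congr' fun x => ?_)
          rw [e3, e2]
        rw [erSeq_eq col q j, erSeq_eq col q' j]
        have hq : q ∈ erCand col q j (fun j _ => erSeq col q j) :=
          ⟨fun k hk => h2 k (lt_of_lt_of_le hk hj), fun x => rfl⟩
        have hne : (erCand col q j (fun j _ => erSeq col q j)).Nonempty := ⟨q, hq⟩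
        have hne' : (erCand col q' j (fun j _ => erSeq col q' j)).Nonempty := hS ▸ hne
        rw [dif_pos hne, dif_pos hne']
        congr 1
    have hΦ : Function.Injective Φ := by
      intro q q' h
      have hi : I q = I q' := congrArg Sigma.fst h
      have ht : ∀ x : Fin n → Iio (I q),
        col (Fin.snoc (α := fun _ => W) (fun k => erSeq col q (x k).1) q) =
        col (Fin.snoc (α := fun _ => W) (fun k => erSeq col q' (x k).1) q') := by
        have aux : ∀ (A B : Σ i : L, ((Fin n → Iio i) → ℕ)), A = B → ∀ (hh : A.1 = B.1) (x : Fin n → Iio A.1),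
            A.2 x = B.2 (fun k => ⟨(x k).1, hh ▸ (x k).2⟩) := by
          rintro A B rfl hh x; rfl
        exact fun x => aux _ _ h hi x
      have := key q q' (I q) ht (hI1 q) (hi ▸ hI1 q') (I q) le_rfl
      rw [hI2 q, hi, hI2 q'] at this
      exact this
    have h1 := mk_le_of_injective hΦ
    refine absurd hW (not_lt.2 (h1.trans ?_))
    rw [mk_sigma]
    refine (sum_le_sum _ (fun _ => 2 ^ c) ?_).trans ?_
    · intro i
      simp only [mk_pi, prod_const, mk_nat, lift_aleph0, lift_id, lift_uzero]
      have h3 : #(Fin n → Iio i) ≤ c := by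
        simp only [mk_pi, prod_const, lift_id, lift_uzero, mk_fin, lift_natCast]
        exact (power_le_power_right (hL i)).trans (by exact_mod_cast Cardinal.power_nat_le hc)
      calc _ ≤ (ℵ₀ : Cardinal.{u}) ^ c := by
            refine power_le_power_left aleph0_ne_zero ?_
            simpa using h3
        _ ≤ c ^ c := power_le_power_right hc
        _ = 2 ^ c := power_self_eq hc
    · rw [sum_const]
      simp only [lift_id]
      exact (mul_le_mul' hL' le_rfl).trans (mul_eq_self (hc.trans (cantor c).le)).le
end ER

theorem er_four {α : Type u} (hα : (2 : Cardinal.{u}) ^ ((2 : Cardinal.{u}) ^ continuum.{u}) < #α)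
    (col : (Fin 4 → α) → ℕ) : ∃ g : ℕ → α, Function.Injective g ∧ ∃ k, ∀ x : Fin 4 → ℕ, StrictMono x →
      col (g ∘ x) = k := by
  obtain ⟨_, _⟩ := exists_wellFoundedLT α
  have hI : ∀ (c : Cardinal.{u}) (i : (Order.succ c).ord.ToType), #(Iio i) ≤ c := fun c i =>
    Order.lt_succ_iff.1 (mk_Iio_toType_ord_lt i)
  have hI' : ∀ (c : Cardinal.{u}), #((Order.succ c).ord.ToType) = Order.succ c := fun c => by simp
  have h2 : ∀ (c : Cardinal.{u}), Order.succ c ≤ 2 ^ c := fun c => Order.succ_le_of_lt (cantor c)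
  have hcc : ℵ₀ ≤ continuum.{u} := aleph0_le_continuum
  obtain ⟨g3, hg3, c3, h3⟩ := er_step (L := (Order.succ ((2 : Cardinal.{u}) ^ continuum.{u})).ord.ToType)
    _ (hcc.trans (cantor _).le) (hI _) ((hI' _).trans_le (h2 _)) hα col
  obtain ⟨g2, hg2, c2, h2'⟩ := er_step (L := (Order.succ (continuum.{u})).ord.ToType)
    _ hcc (hI _) ((hI' _).trans_le (h2 _)) (by rw [hI']; exact Order.lt_succ _) c3
  obtain ⟨g1, hg1, c1, h1⟩ := er_step (L := (Order.succ (ℵ₀ : Cardinal.{u})).ord.ToType)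
    _ le_rfl (hI _) ((hI' _).trans_le (h2 _)) (by rw [hI']; simp) c2
  have hunc : (ℵ₀ : Cardinal.{u}) < #((Order.succ (ℵ₀ : Cardinal.{u})).ord.ToType) := by
    rw [hI']; exact Order.lt_succ _
  have : ∃ k, (Set.Infinite ((fun w => c1 (fun _ => w)) ⁻¹' {k})) := by
    by_contra hcon
    push Not at hcon
    have : (Set.univ : Set ((Order.succ (ℵ₀ : Cardinal.{u})).ord.ToType)).Countable := by
      have e : (Set.univ : Set ((Order.succ (ℵ₀ : Cardinal.{u})).ord.ToType)) =
        ⋃ k, ((fun w => c1 (fun _ => w)) ⁻¹' {k}) := by ext; simp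
      rw [e]
      exact countable_iUnion fun k => (hcon k).countable
    rw [← le_aleph0_iff_set_countable, mk_univ] at this
    exact absurd hunc (not_lt.2 this)
  obtain ⟨k, hk⟩ := this
  have : ∃ g0 : ℕ → (Order.succ (ℵ₀ : Cardinal.{u})).ord.ToType, StrictMono g0 ∧ ∀ n, c1 (fun _ => g0 n) = k := by
    let e := hk.natEmbedding
    rcases exists_increasing_or_nonincreasing_subseq (· < ·) (fun n => (e n).1) with ⟨f, hf | hf⟩
    · exact ⟨fun n => (e (f n)).1, fun a b h => hf a b h, fun n => (e (f n)).2⟩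
    · exfalso
      have hd : ∀ a b, a < b → (e (f b)).1 < (e (f a)).1 := by
        intro a b hab
        refine lt_of_le_of_ne (not_lt.1 (hf a b hab)) ?_
        intro h
        have := f.injective (e.injective (Subtype.ext h))
        omega
      exact (RelEmbedding.natGT (r := (· < ·)) (fun n => (e (f n)).1) (fun n => hd _ _ (Nat.lt_succ_self n))).not_wellFounded wellFounded_lt
  obtain ⟨g0, hg0, h0⟩ := this
  refine ⟨fun n => g3 (g2 (g1 (g0 n))), (hg3.comp (hg2.comp (hg1.comp hg0))).injective, k, ?_⟩
  intro x hx
  have hinit : ∀ {β : Type u} [LinearOrder β] {m : ℕ} (y : Fin (m+1) → β), StrictMono y → StrictMono (Fin.init y) :=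
    fun y hy a b hab => hy (by simpa using hab)
  have hx0 := hg0.comp hx
  have a1 := hg1.comp (hinit _ hx0)
  have e3 := h3 (g2 ∘ g1 ∘ g0 ∘ x) (hg2.comp (hg1.comp (hg0.comp hx)))
  have e2 := h2' (Fin.init (g1 ∘ g0 ∘ x)) (hinit _ (hg1.comp (hg0.comp hx)))
  have e1 := h1 (Fin.init (Fin.init (g0 ∘ x))) (hinit _ (hinit _ (hg0.comp hx)))
  refine Eq.trans e3 (Eq.trans e2 (Eq.trans e1 ?_))
  rw [← h0 (x 0)]
  congr 1
  funext i
  fin_cases i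
  rfl

end part1

section part2
open Set

theorem ramsey_step {γ : Type*} [Finite γ] {r : ℕ} (col : (Fin (r+1) → ℕ) → γ) :
    ∃ g : ℕ → ℕ, StrictMono g ∧ ∃ c' : (Fin r → ℕ) → γ, ∀ x : Fin (r+1) → ℕ, StrictMono x →
      col (g ∘ x) = c' (Fin.init x) := by
  have h1 : ∀ x : Fin r → ℕ, ∃ k, ∀ᶠ d in (Filter.hyperfilter ℕ : Filter ℕ), col (Fin.snoc (α := fun _ => ℕ) x d) = k := by
    intro x
    obtain ⟨k, hk⟩ := Ultrafilter.eq_pure_of_finite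
      ((Filter.hyperfilter ℕ).map (fun d => col (Fin.snoc (α := fun _ => ℕ) x d)))
    refine ⟨k, ?_⟩
    have : {k} ∈ ((Filter.hyperfilter ℕ).map (fun d => col (Fin.snoc (α := fun _ => ℕ) x d))) := by
      rw [hk]; exact Ultrafilter.mem_pure.2 rfl
    exact this
  choose c' hc' using h1
  let R : ℕ → ℕ → Prop := fun m n => m < n ∧ ∀ x : Fin r → ℕ, (∀ i, x i ≤ m) →
    col (Fin.snoc (α := fun _ => ℕ) x n) = c' x
  have hR : ∀ m, ∀ᶠ n in (Filter.hyperfilter ℕ : Filter ℕ), R m n := by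
    intro m
    refine Filter.Eventually.and ?_ ?_
    · have : {n | m < n} ∈ (Filter.cofinite : Filter ℕ) := by
        rw [Nat.cofinite_eq_atTop]; exact Filter.eventually_gt_atTop m
      exact Filter.hyperfilter_le_cofinite this
    · have hf : {x : Fin r → ℕ | ∀ i, x i ≤ m}.Finite := by
        have : {x : Fin r → ℕ | ∀ i, x i ≤ m} = Set.Iic (fun _ => m) := by
          ext x; simp [Pi.le_def]
        rw [this]; exact Set.finite_Iic _
      exact (Filter.eventually_all_finite hf).2 (fun x _ => hc' x)
  obtain ⟨f, -, hf⟩ := exists_seq_of_forall_finset_exists (fun _ : ℕ => True) R (by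
    intro s _
    have : ∀ᶠ n in (Filter.hyperfilter ℕ : Filter ℕ), ∀ x ∈ s, R x n :=
      (Filter.eventually_all_finset s).2 (fun x _ => hR x)
    obtain ⟨y, hy⟩ := this.exists
    exact ⟨y, trivial, hy⟩)
  have hfm : StrictMono f := fun a b h => (hf a b h).1
  refine ⟨fun n => f (n+1), fun a b h => hfm (by omega), fun x => c' (fun i => f (x i + 1)), ?_⟩
  intro x hx
  have := (hf (x (Fin.last r)) (x (Fin.last r) + 1) (by omega)).2 (fun i => f (x i.castSucc + 1)) (by
    intro i
    have := hx (Fin.castSucc_lt_last i)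
    exact hfm.monotone (by omega))
  refine Eq.trans ?_ this
  congr 1
  funext k
  refine Fin.lastCases ?_ (fun k => ?_) k <;> simp

theorem ramsey_inf {γ : Type*} [Finite γ] (r : ℕ) : ∀ (col : (Fin r → ℕ) → γ),
    ∃ g : ℕ → ℕ, StrictMono g ∧ ∃ k, ∀ x : Fin r → ℕ, StrictMono x → col (g ∘ x) = k := by
  induction r with
  | zero =>
    intro col
    exact ⟨id, strictMono_id, col Fin.elim0, fun x _ => congrArg col (Subsingleton.elim _ _)⟩
  | succ r ih =>
    intro col
    obtain ⟨g, hg, c', h⟩ := ramsey_step col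
    obtain ⟨g', hg', k, h'⟩ := ih c'
    refine ⟨g ∘ g', hg.comp hg', k, fun x hx => ?_⟩
    refine (h (g' ∘ x) (hg'.comp hx)).trans ?_
    exact h' (Fin.init x) (fun a b hab => hx (by simpa using hab))

end part2

section part3
open Set

theorem extend_hom {M A Q : Type*} [AddCommGroup M] [AddCommGroup A] [AddCommGroup Q] [DivisibleBy Q ℤ]
    (a : M →+ A) (b : M →+ Q) (h : ∀ m, a m = 0 → b m = 0) : ∃ φ : A →+ Q, ∀ m, φ (a m) = b m := by
  obtain ⟨φ, hφ⟩ := (Module.Baer.of_divisible Q).extension_property_addMonoidHom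
    (QuotientAddGroup.kerLift a) (QuotientAddGroup.kerLift_injective a)
    (QuotientAddGroup.lift a.ker b (fun m hm => h m hm))
  refine ⟨φ, fun m => ?_⟩
  have := DFunLike.congr_fun hφ (m : M ⧸ a.ker)
  exact this

noncomputable instance finsuppDivisible {I C : Type*} [AddCommGroup C] [DivisibleBy C ℤ] : DivisibleBy (I →₀ C) ℤ :=
  divisibleByOfSMulRightSurj _ _ (by
    classical
    intro n hn f
    refine ⟨f.mapRange (fun c => if c = 0 then 0 else DivisibleBy.div c n) (by simp), ?_⟩
    ext i
    simp only [Finsupp.smul_apply, Finsupp.mapRange_apply]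
    split_ifs with h
    · simp [h]
    · exact DivisibleBy.div_cancel _ hn)

/-- Coordinates. -/
abbrev CC : Type := ℚ × AddCircle (1 : ℚ)

instance : Countable CC := by
  have : Countable (AddCircle (1 : ℚ)) := Quotient.countable
  infer_instance

noncomputable instance : DivisibleBy ℚ ℤ where
  div a n := a / n
  div_zero a := by simp
  div_cancel := by
    intro n a hn
    simp only [zsmul_eq_mul]
    field_simp

theorem exists_order (k : ℕ) : ∃ c : CC, addOrderOf c = k := by
  rcases Nat.eq_zero_or_pos k with rfl | hk
  · refine ⟨(1, 0), ?_⟩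
    rw [addOrderOf_eq_zero_iff']
    intro n hn h
    have := congrArg Prod.fst h
    simp at this
    omega
  · refine ⟨(0, (((1 : ℚ) / k : ℚ) : AddCircle (1 : ℚ))), ?_⟩
    have : Fact ((0 : ℚ) < 1) := ⟨one_pos⟩
    rw [Prod.addOrderOf]
    simp only [addOrderOf_zero]
    rw [AddCircle.addOrderOf_period_div hk]
    simp

theorem embed (H : Type*) [AddCommGroup H] : ∃ φ : H →+ (H →₀ CC), Function.Injective φ := by
  classical
  let Ind : Set H → Prop := fun S => ∀ m : H →₀ ℤ, (m.support : Set H) ⊆ S →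
    Finsupp.linearCombination ℤ (id : H → H) m = 0 → ∀ h, m h • h = 0
  obtain ⟨S, hS⟩ : ∃ S, Maximal (fun S => S ∈ {S | Ind S}) S := by
    refine zorn_subset _ ?_
    intro c hc hchain
    refine ⟨⋃₀ c, ?_, fun s hs => subset_sUnion_of_mem hs⟩
    intro m hm
    rcases c.eq_empty_or_nonempty with rfl | hne
    · intro _ h
      have : m.support = ∅ := by
        ext x; constructor
        · intro hx; simpa using hm hx
        · simp
      rw [Finsupp.support_eq_empty] at this
      simp [this]
    · obtain ⟨t, ht, hmt⟩ := DirectedOn.exists_mem_subset_of_finset_subset_biUnion (s := m.support) (f := id) hne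
        (hchain.directedOn) (by simpa [sUnion_eq_biUnion] using hm)
      exact hc ht m hmt
  choose c hcc using fun h : H => exists_order (addOrderOf h)
  have hz : ∀ (h : H) (n : ℤ), n • c h = 0 ↔ n • h = 0 := by
    intro h n
    rw [← addOrderOf_dvd_iff_zsmul_eq_zero, ← addOrderOf_dvd_iff_zsmul_eq_zero, hcc]
  let b := Finsupp.linearCombination ℤ (fun h : H => (Finsupp.single h (c h) : H →₀ CC))
  have hb : ∀ m h, b m h = m h • c h := by
    intro m h
    simp only [b, Finsupp.linearCombination_apply, Finsupp.sum, Finsupp.finsetSum_apply, Finsupp.smul_apply,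
      Finsupp.single_apply]
    rw [Finset.sum_eq_single h]
    · simp
    · intro b _ hb; simp [hb]
    · intro hh; simp [Finsupp.notMem_support_iff.1 hh]
  let a := Finsupp.linearCombination ℤ (id : H → H)
  obtain ⟨φ, hφ⟩ := extend_hom ((a.comp (Finsupp.supported ℤ ℤ S).subtype).toAddMonoidHom)
    ((b.comp (Finsupp.supported ℤ ℤ S).subtype).toAddMonoidHom) (by
      rintro ⟨m, hm⟩ h0
      ext1 h
      have := hS.1 m ((Finsupp.mem_supported _ _).1 hm) h0 h
      change b m h = 0
      rw [hb, hz, this])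
  have hφ' : ∀ m : H →₀ ℤ, (m.support : Set H) ⊆ S → φ (a m) = b m := fun m hm =>
    hφ ⟨m, (Finsupp.mem_supported _ _).2 hm⟩
  refine ⟨φ, (injective_iff_map_eq_zero φ).2 fun h h0 => ?_⟩
  by_contra hne
  by_cases hhS : h ∈ S
  · have h1 := hφ' (Finsupp.single h 1) (by
      intro x hx
      have := Finsupp.support_single_subset hx
      simp at this; rwa [this])
    have h2 : a (Finsupp.single h 1) = h := by simp [a]
    rw [h2, h0] at h1
    have h3 := hb (Finsupp.single h 1) h
    rw [← h1] at h3
    have := (hz h 1).1 (by simpa using h3.symm)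
    simp at this; exact hne this
  · apply hhS
    refine hS.2 (y := insert h S) ?_ (subset_insert _ _) (mem_insert _ _)
    intro m hm hm0 k
    have hsplit : m = Finsupp.single h (m h) + m.erase h := (Finsupp.single_add_erase h m).symm
    have hes : ((m.erase h).support : Set H) ⊆ S := by
      intro x hx
      rw [Finsupp.support_erase] at hx
      simp only [Finset.coe_erase] at hx
      rcases hm hx.1 with h' | h'
      · exact absurd h' hx.2
      · exact h'
    have e1 : m h • h + a (m.erase h) = 0 := by
      have : a m = m h • h + a (m.erase h) := by
        conv_lhs => rw [hsplit]
        rw [map_add]; simp [a]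
      rw [← this]; exact hm0
    have e2 : b (m.erase h) = 0 := by
      have := congrArg φ e1
      rw [map_add, map_zsmul, h0, hφ' _ hes] at this
      simpa using this
    have e3 : ∀ k, k ≠ h → m k • k = 0 := by
      intro k hk
      have := hb (m.erase h) k
      rw [e2, Finsupp.erase_ne hk] at this
      exact (hz k _).1 this.symm
    by_cases hk : k = h
    · subst hk
      have : a (m.erase k) = 0 := by
        simp only [a, Finsupp.linearCombination_apply, Finsupp.sum]
        refine Finset.sum_eq_zero fun x hx => ?_
        have hxk : x ≠ k := by
          rintro rfl; simp at hx
        rw [Finsupp.erase_ne hxk]; exact e3 x hxk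
      rwa [this, add_zero] at e1
    · exact e3 k hk

end part3

section part4
open Set

theorem extend_sm {m : ℕ} (z : Fin (m+1) → ℕ) (hz : StrictMono z) :
    ∃ σ : ℕ → ℕ, StrictMono σ ∧ ∀ i : Fin (m+1), σ i = z i := by
  refine ⟨fun k => if h : k < m+1 then z ⟨k, h⟩ else z (Fin.last m) + k, ?_, ?_⟩
  · intro a b hab
    simp only
    split_ifs with h1 h2 h2
    · exact hz hab
    · have := hz.monotone (Fin.le_last ⟨a, h1⟩); omega
    · omega
    · omega
  · intro i; exact dif_pos i.2

theorem exists_std (p : Fin 4) (u w : Fin 4 → ℕ) (hu : StrictMono u) (hw : StrictMono w)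
    (h : ∀ q, q ≠ p → u q = w q) (hp : u p < w p) :
    ∃ z : Fin 5 → ℕ, StrictMono z ∧ ∀ i, z (p.succ.succAbove i) = u i ∧ z (p.castSucc.succAbove i) = w i := by
  have u1 : u 0 < u 1 := hu (by decide)
  have u2 : u 1 < u 2 := hu (by decide)
  have u3 : u 2 < u 3 := hu (by decide)
  have w1 : w 0 < w 1 := hw (by decide)
  have w2 : w 1 < w 2 := hw (by decide)
  have w3 : w 2 < w 3 := hw (by decide)
  have h0 := h 0
  have h1 := h 1
  have h2 := h 2
  have h3 := h 3
  fin_cases p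
  · refine ⟨![u 0, w 0, w 1, w 2, w 3], ?_, ?_⟩
    · refine Fin.strictMono_iff_lt_succ.2 fun i => ?_
      fin_cases i <;> simp <;> simp at * <;> omega
    · intro i
      fin_cases i <;> simp [Fin.succAbove] <;> simp at * <;> omega
  · refine ⟨![w 0, u 1, w 1, w 2, w 3], ?_, ?_⟩
    · refine Fin.strictMono_iff_lt_succ.2 fun i => ?_
      fin_cases i <;> simp <;> simp at * <;> omega
    · intro i
      fin_cases i <;> simp [Fin.succAbove] <;> simp at * <;> omega
  · refine ⟨![w 0, w 1, u 2, w 2, w 3], ?_, ?_⟩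
    · refine Fin.strictMono_iff_lt_succ.2 fun i => ?_
      fin_cases i <;> simp <;> simp at * <;> omega
    · intro i
      fin_cases i <;> simp [Fin.succAbove] <;> simp at * <;> omega
  · refine ⟨![w 0, w 1, w 2, u 3, w 3], ?_, ?_⟩
    · refine Fin.strictMono_iff_lt_succ.2 fun i => ?_
      fin_cases i <;> simp <;> simp at * <;> omega
    · intro i
      fin_cases i <;> simp [Fin.succAbove] <;> simp at * <;> omega

def stdA (p : Fin 4) : Fin 4 → ℕ := fun i => ((p.succ.succAbove i : Fin 5) : ℕ)
def stdB (p : Fin 4) : Fin 4 → ℕ := fun i => ((p.castSucc.succAbove i : Fin 5) : ℕ)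

theorem stdA_sm (p : Fin 4) : StrictMono (stdA p) := fun _ _ h => Fin.strictMono_succAbove _ h
theorem stdB_sm (p : Fin 4) : StrictMono (stdB p) := fun _ _ h => Fin.strictMono_succAbove _ h

theorem exists_std' (p : Fin 4) (u w : Fin 4 → ℕ) (hu : StrictMono u) (hw : StrictMono w)
    (h : ∀ q, q ≠ p → u q = w q) (hp : u p < w p) :
    ∃ σ : ℕ → ℕ, StrictMono σ ∧ σ ∘ stdA p = u ∧ σ ∘ stdB p = w := by
  obtain ⟨z, hz, hz'⟩ := exists_std p u w hu hw h hp
  obtain ⟨σ, hσ, hσ'⟩ := extend_sm z hz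
  refine ⟨σ, hσ, funext fun i => ?_, funext fun i => ?_⟩
  · exact (hσ' _).trans (hz' i).1
  · exact (hσ' _).trans (hz' i).2

section canon
variable {I : Type*} {n : ℕ} (s : (Fin 4 → ℕ) → Fin n → I)

def Homog : Prop := ∀ σ : ℕ → ℕ, StrictMono σ → ∀ x y : Fin 4 → ℕ, StrictMono x → StrictMono y →
  ∀ j j', s x j = s y j' ↔ s (σ ∘ x) j = s (σ ∘ y) j'

def Dep (j : Fin n) (p : Fin 4) : Prop := s (stdA p) j ≠ s (stdB p) j

variable {s}

theorem dep_iff (hs : Homog s) (j : Fin n) (p : Fin 4) (u w : Fin 4 → ℕ) (hu : StrictMono u) (hw : StrictMono w)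
    (h : ∀ q, q ≠ p → u q = w q) (hp : u p < w p) : Dep s j p ↔ s u j ≠ s w j := by
  obtain ⟨σ, hσ, rfl, rfl⟩ := exists_std' p u w hu hw h hp
  exact not_congr (hs σ hσ _ _ (stdA_sm p) (stdB_sm p) j j)

theorem eq_of_le (hs : Homog s) (j : Fin n) (y z : Fin 4 → ℕ) (hy : StrictMono y) (hz : StrictMono z)
    (hle : ∀ i, y i ≤ z i) (h : ∀ i, Dep s j i → y i = z i) : s y j = s z j := by
  let k : ℕ → Fin 4 → ℕ := fun t i => if i.val < t then y i else z i
  have hk : ∀ t, StrictMono (k t) := by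
    intro t a b hab
    have h1 := hy hab
    have h2 := hz hab
    have h3 := hle b
    have h4 : a.val < b.val := hab
    simp only [k]
    split_ifs <;> omega
  have step : ∀ t, t ≤ 4 → s (k t) j = s z j := by
    intro t
    induction t with
    | zero => intro _; congr 1
    | succ t ih =>
      intro ht
      rw [← ih (by omega)]
      have hag : ∀ q : Fin 4, q ≠ ⟨t, by omega⟩ → k (t+1) q = k t q := by
        intro q hq
        have : q.val ≠ t := fun h => hq (Fin.ext h)
        simp only [k]
        split_ifs <;> omega
      have hvt : k (t+1) ⟨t, by omega⟩ = y ⟨t, by omega⟩ := by simp [k]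
      have hvt' : k t ⟨t, by omega⟩ = z ⟨t, by omega⟩ := by simp [k]
      rcases (hle ⟨t, by omega⟩).lt_or_eq with hlt | heq
      · by_contra hne
        have := (dep_iff hs j ⟨t, by omega⟩ _ _ (hk (t+1)) (hk t) hag (by rw [hvt, hvt']; exact hlt)).2 hne
        have := h _ this
        omega
      · have : k (t+1) = k t := by
          funext q
          by_cases hq : q = ⟨t, by omega⟩
          · rw [hq, hvt, hvt', heq]
          · exact hag q hq
        rw [this]
  have := step 4 le_rfl
  rw [← this]
  congr 1
  funext i
  simp [k]

theorem eq_of_agree (hs : Homog s) (j : Fin n) (y z : Fin 4 → ℕ) (hy : StrictMono y) (hz : StrictMono z)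
    (h : ∀ i, Dep s j i → y i = z i) : s y j = s z j := by
  have hm : StrictMono (fun i => max (y i) (z i)) := fun a b hab => max_lt_max (hy hab) (hz hab)
  rw [eq_of_le hs j y _ hy hm (fun i => le_max_left _ _) (fun i hi => by simp [h i hi]),
    eq_of_le hs j z _ hz hm (fun i => le_max_right _ _) (fun i hi => by simp [h i hi])]

theorem dbl_sm : StrictMono (fun k : ℕ => 2 * k) := fun a b h => by simp only; omega

theorem dep_hit (hs : Homog s) {j j' : Fin n} {x y : Fin 4 → ℕ} (hx : StrictMono x) (hy : StrictMono y)
    (h : s x j = s y j') {p : Fin 4} (hp : Dep s j p) : ∃ q, y q = x p := by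
  by_contra hcon
  push Not at hcon
  let τ : ℕ → ℕ := fun k => if k = x p then 2 * k + 1 else 2 * k
  have hτ : StrictMono τ := by
    intro a b hab
    simp only [τ]
    split_ifs <;> omega
  have e1 := (hs _ dbl_sm x y hx hy j j').1 h
  have e2 := (hs τ hτ x y hx hy j j').1 h
  have e3 : τ ∘ y = (fun k : ℕ => 2 * k) ∘ y := by
    funext q; simp [τ, hcon q]
  rw [e3] at e2
  refine (dep_iff hs j p ((fun k : ℕ => 2 * k) ∘ x) (τ ∘ x) (dbl_sm.comp hx) (hτ.comp hx) ?_ ?_).1 hp (e1.trans e2.symm)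
  · intro q hq
    have : x q ≠ x p := fun h => hq (hx.injective h)
    simp [τ, this]
  · simp [τ]

theorem dep_hit' (hs : Homog s) {j j' : Fin n} {x y : Fin 4 → ℕ} (hx : StrictMono x) (hy : StrictMono y)
    (h : s x j = s y j') {p : Fin 4} (hp : Dep s j p) : ∃ q, Dep s j' q ∧ y q = x p := by
  obtain ⟨q, hq⟩ := dep_hit hs hx hy h hp
  refine ⟨q, ?_, hq⟩
  by_contra hnd
  let τ : ℕ → ℕ := fun k => if k = y q then 2 * k + 1 else 2 * k
  have hτ : StrictMono τ := by
    intro a b hab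
    simp only [τ]
    split_ifs <;> omega
  have e1 := (hs _ dbl_sm x y hx hy j j').1 h
  have e2 : s ((fun k : ℕ => 2 * k) ∘ y) j' = s (τ ∘ y) j' := by
    refine eq_of_agree hs j' _ _ (dbl_sm.comp hy) (hτ.comp hy) fun i hi => ?_
    have hiq : i ≠ q := by rintro rfl; exact hnd hi
    have : y i ≠ y q := fun h => hiq (hy.injective h)
    simp [τ, this]
  obtain ⟨q', hq'⟩ := dep_hit hs (dbl_sm.comp hx) (hτ.comp hy) (e1.trans e2) hp
  simp only [τ, Function.comp] at hq'
  split_ifs at hq' <;> omega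

open Classical in
/-- the dependence set -/
noncomputable def dset (s : (Fin 4 → ℕ) → Fin n → I) (j : Fin n) : Finset (Fin 4) := Finset.univ.filter (fun p => Dep s j p)

theorem image_eq (hs : Homog s) {j j' : Fin n} {x y : Fin 4 → ℕ} (hx : StrictMono x) (hy : StrictMono y)
    (h : s x j = s y j') : (dset s j).image x = (dset s j').image y := by
  ext a
  simp only [Finset.mem_image, dset, Finset.mem_filter, Finset.mem_univ, true_and]
  constructor
  · rintro ⟨p, hp, rfl⟩; exact dep_hit' hs hx hy h hp
  · rintro ⟨p, hp, rfl⟩; exact dep_hit' hs hy hx h.symm hp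

theorem count_eq (hs : Homog s) {j j' : Fin n} {x y : Fin 4 → ℕ} (hx : StrictMono x) (hy : StrictMono y)
    (h : s x j = s y j') (P : ℕ → Prop) [DecidablePred P] :
    ((dset s j).filter (fun t => P (x t))).card = ((dset s j').filter (fun t => P (y t))).card := by
  have e : ∀ (x : Fin 4 → ℕ) (_ : StrictMono x) (D : Finset (Fin 4)), (D.filter (fun t => P (x t))).card =
      ((D.image x).filter P).card := by
    intro x hx D
    rw [Finset.filter_image, Finset.card_image_of_injective _ hx.injective]
  rw [e x hx, e y hy, image_eq hs hx hy h]

def Gappy (B : ℕ) (x : Fin 4 → ℕ) : Prop := B < x 0 ∧ x 0 + B < x 1 ∧ x 1 + B < x 2 ∧ x 2 + B < x 3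

theorem Gappy.sm {B : ℕ} {x : Fin 4 → ℕ} (h : Gappy B x) : StrictMono x := by
  obtain ⟨h0, h1, h2, h3⟩ := h
  refine Fin.strictMono_iff_lt_succ.2 fun i => ?_
  fin_cases i <;> simp <;> omega

theorem exists_gappy (B : ℕ) (S : Fin 4 → Set ℕ) (hS : ∀ i, (S i).Infinite) : ∃ x, Gappy B x ∧ ∀ i, x i ∈ S i := by
  obtain ⟨a, ha, ha'⟩ := (hS 0).exists_gt B
  obtain ⟨b, hb, hb'⟩ := (hS 1).exists_gt (a + B)
  obtain ⟨c, hc, hc'⟩ := (hS 2).exists_gt (b + B)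
  obtain ⟨d, hd, hd'⟩ := (hS 3).exists_gt (c + B)
  refine ⟨![a, b, c, d], ⟨ha', hb', hc', hd'⟩, fun i => ?_⟩
  fin_cases i <;> simpa

theorem gappy_extend {B : ℕ} {x x0 : Fin 4 → ℕ} (hx : Gappy B x) (hx0 : StrictMono x0) (hB : ∀ i, x0 i ≤ B) :
    ∃ σ : ℕ → ℕ, StrictMono σ ∧ σ ∘ x0 = x := by
  let D : ℕ → ℕ := fun k => Finset.univ.sup (fun i : Fin 4 => if x0 i ≤ k then x i - x0 i else 0)
  have hD : Monotone D := by
    intro a b hab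
    refine Finset.sup_mono_fun fun i _ => ?_
    split_ifs <;> omega
  have hm : Monotone (fun i => x i - x0 i) := by
    obtain ⟨h0, h1, h2, h3⟩ := hx
    have := hB 0
    have := hB 1
    have := hB 2
    have := hB 3
    refine Fin.monotone_iff_le_succ.2 fun i => ?_
    fin_cases i <;> simp <;> omega
  have hge : ∀ i, x0 i ≤ x i := by
    intro i
    have h1 := hx.sm.monotone (Fin.zero_le i)
    have h2 := hx.1
    have h3 := hB i
    omega
  refine ⟨fun k => k + D k, fun a b h => ?_, funext fun i => ?_⟩
  · have := hD h.le
    simp only; omega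
  · have : D (x0 i) = x i - x0 i := by
      apply le_antisymm
      · refine Finset.sup_le fun k _ => ?_
        split_ifs with hk
        · exact hm (hx0.le_iff_le.1 hk)
        · omega
      · have := Finset.le_sup (f := fun k : Fin 4 => if x0 k ≤ x0 i then x k - x0 k else 0) (Finset.mem_univ i)
        simpa using this
    have := hge i
    simp only [Function.comp]
    omega
end canon

theorem alg_f1 : ∀ p q : Fin 4, p ≠ q →
    (Finset.univ.filter (fun K : Finset (Fin 4) => K.card = 1 ∧ (K ∩ {p, q}).card = 1)) = {{p}, {q}} := by
  decide

theorem alg_f2 : ∀ p q : Fin 4, p ≠ q →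
    (Finset.univ.filter (fun K : Finset (Fin 4) => K.card = 2 ∧ (K ∩ {p, q}).card = 2)) = {{p, q}} := by
  decide

theorem alg_f3 : ∀ p q : Fin 4, p ≠ q →
    (Finset.univ.filter (fun K : Finset (Fin 4) => K.card = 3 ∧ (K ∩ {p, q}).card = 1)) = {{p}ᶜ, {q}ᶜ} := by
  decide

theorem alg_four {C : Type*} [AddCommGroup C] (V : Finset (Fin 4) → C) (k : ℕ)
    (h : ∀ p q : Fin 4, p ≠ q → ∀ m : ℕ, ∑ K ∈ Finset.univ.filter (fun K : Finset (Fin 4) => K.card = k ∧ (K ∩ {p, q}).card = m), V K = 0)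
    (K : Finset (Fin 4)) (hK : K.card = k) : V K + V K = 0 := by
  have hk : k ≤ 4 := by rw [← hK]; exact Finset.card_le_univ K
  interval_cases k
  · have := h 0 1 (by decide) 0
    rw [show (Finset.univ.filter (fun K : Finset (Fin 4) => K.card = 0 ∧ (K ∩ {0, 1}).card = 0)) = {∅} by decide] at this
    rw [Finset.card_eq_zero] at hK
    subst hK
    simp at this
    simp [this]
  · have key : ∀ p q : Fin 4, p ≠ q → V {p} + V {q} = 0 := by
      intro p q hpq
      have := h p q hpq 1
      have e : (Finset.univ.filter (fun K : Finset (Fin 4) => K.card = 1 ∧ (K ∩ {p, q}).card = 1)) = {{p}, {q}} :=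
        alg_f1 p q hpq
      rw [e, Finset.sum_pair (by simpa using hpq)] at this
      exact this
    obtain ⟨p, rfl⟩ := Finset.card_eq_one.1 hK
    obtain ⟨q, r, h1, h2, h3⟩ : ∃ q r : Fin 4, p ≠ q ∧ p ≠ r ∧ q ≠ r := by decide +revert
    have e1 := key p q h1
    have e2 := key p r h2
    have e3 := key q r h3
    calc V {p} + V {p} = (V {p} + V {q}) + (V {p} + V {r}) - (V {q} + V {r}) := by abel
      _ = 0 := by rw [e1, e2, e3]; simp
  · obtain ⟨p, q, hpq, rfl⟩ := Finset.card_eq_two.1 hK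
    have := h p q hpq 2
    have e : (Finset.univ.filter (fun K : Finset (Fin 4) => K.card = 2 ∧ (K ∩ {p, q}).card = 2)) = {{p, q}} :=
      alg_f2 p q hpq
    rw [e] at this
    simp at this
    simp [this]
  · have key : ∀ p q : Fin 4, p ≠ q → V {p}ᶜ + V {q}ᶜ = 0 := by
      intro p q hpq
      have := h p q hpq 1
      have e : (Finset.univ.filter (fun K : Finset (Fin 4) => K.card = 3 ∧ (K ∩ {p, q}).card = 1)) = {{p}ᶜ, {q}ᶜ} :=
        alg_f3 p q hpq
      rw [e, Finset.sum_pair (by simpa using hpq)] at this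
      exact this
    obtain ⟨p, rfl⟩ : ∃ p, K = {p}ᶜ := by decide +revert
    obtain ⟨q, r, h1, h2, h3⟩ : ∃ q r : Fin 4, p ≠ q ∧ p ≠ r ∧ q ≠ r := by clear hK; decide +revert
    have e1 := key p q h1
    have e2 := key p r h2
    have e3 := key q r h3
    calc V {p}ᶜ + V {p}ᶜ = (V {p}ᶜ + V {q}ᶜ) + (V {p}ᶜ + V {r}ᶜ) - (V {q}ᶜ + V {r}ᶜ) := by abel
      _ = 0 := by rw [e1, e2, e3]; simp
  · have := h 0 1 (by decide) 2
    rw [show (Finset.univ.filter (fun K : Finset (Fin 4) => K.card = 4 ∧ (K ∩ {0, 1}).card = 2)) = {Finset.univ} by decide] at this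
    have hK' : K = Finset.univ := Finset.eq_univ_of_card K hK
    subst hK'
    simp at this
    simp [this]

open Classical in
theorem canon {I C : Type*} [AddCommGroup C] {n : ℕ} (s : (Fin 4 → ℕ) → Fin n → I) (v : Fin n → C)
    (hinj : ∀ x, StrictMono x → Function.Injective (s x)) (hs : Homog s)
    (hcon : ∀ (J : Set I) (t : C), t ≠ 0 → ∃ (κ : Type w) (_ : Finite κ) (c : ℕ → κ), ∀ x : Fin 4 → ℕ, StrictMono x →
      ∀ π : Equiv.Perm (Fin 4), c (x (π 0)) = c (x (π 1)) → c (x (π 2)) = c (x (π 3)) →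
        ∑ j ∈ Finset.univ.filter (fun j => s x j ∈ J), v j ≠ t) (j₀ : Fin n) : v j₀ + v j₀ = 0 := by
  let E : Fin n → Prop := fun j => ∃ x y, StrictMono x ∧ StrictMono y ∧ s x j = s y j₀
  have hB : ∃ B : ℕ, ∀ j, E j → ∃ x y, StrictMono x ∧ StrictMono y ∧ s x j = s y j₀ ∧ ∀ i, x i ≤ B := by
    have : ∀ j, ∃ B : ℕ, E j → ∃ x y, StrictMono x ∧ StrictMono y ∧ s x j = s y j₀ ∧ ∀ i, x i ≤ B := by
      intro j
      by_cases h : E j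
      · obtain ⟨x, y, hx, hy, h⟩ := h
        exact ⟨x 3, fun _ => ⟨x, y, hx, hy, h, fun i => hx.monotone (Fin.le_last i)⟩⟩
      · exact ⟨0, fun h' => absurd h' h⟩
    choose B hB using this
    refine ⟨Finset.univ.sup B, fun j hj => ?_⟩
    obtain ⟨x, y, hx, hy, h, hb⟩ := hB j hj
    exact ⟨x, y, hx, hy, h, fun i => (hb i).trans (Finset.le_sup (Finset.mem_univ j))⟩
  obtain ⟨B, hB⟩ := hB
  have L4 : ∀ x, Gappy B x → ∀ j, E j → ∃ y, StrictMono y ∧ s x j = s y j₀ := by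
    intro x hx j hj
    obtain ⟨x0, y0, hx0, hy0, h, hb⟩ := hB j hj
    obtain ⟨σ, hσ, rfl⟩ := gappy_extend hx hx0 hb
    exact ⟨σ ∘ y0, hσ.comp hy0, (hs σ hσ _ _ hx0 hy0 _ _).1 h⟩
  obtain ⟨xg, hxg, -⟩ := exists_gappy B (fun _ => Set.univ) (fun _ => Set.infinite_univ)
  have hE0 : E j₀ := ⟨xg, xg, hxg.sm, hxg.sm, rfl⟩
  have hcard : ∀ j, E j → (dset s j).card = (dset s j₀).card := by
    rintro j ⟨x, y, hx, hy, h⟩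
    simpa using count_eq hs hx hy h (fun _ => True)
  -- distinctness
  have hdist : ∀ j, E j → dset s j = dset s j₀ → j = j₀ := by
    intro j hj hd
    obtain ⟨y, hy, h⟩ := L4 xg hxg j hj
    have him := image_eq hs hxg.sm hy h
    rw [hd] at him
    apply hinj xg hxg.sm
    rw [h]
    refine eq_of_agree hs j₀ _ _ hy hxg.sm fun i hi => ?_
    -- two strictly monotone maps with the same image on a finite set agree there
    have hcount : ∀ i ∈ dset s j₀, y i = xg i := by
      have key : ∀ (D : Finset (Fin 4)) (a b : Fin 4 → ℕ), StrictMono a → StrictMono b → D.image a = D.image b →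
          ∀ i ∈ D, a i = b i := by
        intro D a b ha hb hab i hi
        induction D using Finset.induction_on_max with
        | empty => simp at hi
        | insert m D hm ih =>
          have hmx : ∀ (a : Fin 4 → ℕ), StrictMono a → ∀ t ∈ (insert m D).image a, t ≤ a m := by
            intro a ha t ht
            simp only [Finset.mem_image, Finset.mem_insert] at ht
            obtain ⟨k, rfl | hk, rfl⟩ := ht
            · exact le_rfl
            · exact ha.monotone (hm k hk).le
          have ham : a m = b m := by
            apply le_antisymm
            · refine hmx b hb _ ?_
              rw [← hab]; exact Finset.mem_image_of_mem _ (Finset.mem_insert_self _ _)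
            · refine hmx a ha _ ?_
              rw [hab]; exact Finset.mem_image_of_mem _ (Finset.mem_insert_self _ _)
          have hmD : m ∉ D := fun h => lt_irrefl _ (hm m h)
          rcases Finset.mem_insert.1 hi with rfl | hi
          · exact ham
          · refine ih ?_ hi
            have e : ∀ a : Fin 4 → ℕ, StrictMono a → D.image a = ((insert m D).image a).erase (a m) := by
              intro a ha
              rw [Finset.image_insert, Finset.erase_insert]
              simp only [Finset.mem_image, not_exists, not_and]
              intro k hk hkm
              exact hmD (ha.injective hkm ▸ hk)
            rw [e a ha, e b hb, hab, ham]
      exact key _ _ _ hy hxg.sm him.symm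
    exact hcount i (by simpa [dset] using hi)
  -- main claim
  have claimA : ∀ p q : Fin 4, p ≠ q → ∀ m : ℕ,
      ∑ j ∈ Finset.univ.filter (fun j => E j ∧ (dset s j ∩ {p, q}).card = m), v j = 0 := by
    intro p q hpq m
    by_contra hne
    obtain ⟨κ, _, c, hc⟩ := hcon {i | ∃ y, StrictMono y ∧ i = s y j₀ ∧
      ((dset s j₀).filter (fun t => Odd (y t))).card = m} _ hne
    have hmono : ∀ P : ℕ → Prop, {k | P k}.Infinite → ∃ l, {k | P k ∧ c k = l}.Infinite := by
      intro P hP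
      by_contra hcon
      push Not at hcon
      apply hP
      have : {k | P k} = ⋃ l, {k | P k ∧ c k = l} := by ext; simp
      rw [this]
      exact Set.finite_iUnion hcon
    obtain ⟨l1, hl1⟩ := hmono (fun k => Odd k)
      (Set.infinite_of_injective_forall_mem (f := fun k : ℕ => 2 * k + 1) (fun a b h => by simpa using h)
        (fun k => ⟨k, rfl⟩))
    obtain ⟨l2, hl2⟩ := hmono (fun k => ¬ Odd k)
      (Set.infinite_of_injective_forall_mem (f := fun k : ℕ => 2 * k) (fun a b h => by simpa using h)
        (fun k => by simp))
    obtain ⟨x, hx, hxS⟩ := exists_gappy B (fun i => if i = p ∨ i = q then {k | Odd k ∧ c k = l1} else {k | ¬ Odd k ∧ c k = l2}) (by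
      intro i
      split_ifs
      · exact hl1
      · exact hl2)
    obtain ⟨π, hπ⟩ : ∃ π : Equiv.Perm (Fin 4), π 0 = p ∧ π 1 = q ∧ (π 2 ≠ p ∧ π 2 ≠ q) ∧ (π 3 ≠ p ∧ π 3 ≠ q) := by
      clear hxS hc hne
      revert p q; decide
    have hodd : ∀ i, (i = p ∨ i = q) → Odd (x i) ∧ c (x i) = l1 := by
      intro i hi; have := hxS i; rw [if_pos hi] at this; exact this
    have hev : ∀ i, ¬ (i = p ∨ i = q) → ¬ Odd (x i) ∧ c (x i) = l2 := by
      intro i hi; have := hxS i; rw [if_neg hi] at this; exact this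
    have hoi : ∀ i, Odd (x i) ↔ i ∈ ({p, q} : Finset (Fin 4)) := by
      intro i
      simp only [Finset.mem_insert, Finset.mem_singleton]
      by_cases hi : i = p ∨ i = q
      · simp [hi, hodd i hi]
      · simp only [hi, iff_false]; exact (hev i hi).1
    have hcnt : ∀ j, ((dset s j).filter (fun t => Odd (x t))).card = (dset s j ∩ {p, q}).card := by
      intro j
      congr 1
      ext t
      simp only [Finset.mem_filter, Finset.mem_inter, hoi]
    refine hc x hx.sm π ?_ ?_ ?_
    · rw [hπ.1, hπ.2.1, (hodd p (Or.inl rfl)).2, (hodd q (Or.inr rfl)).2]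
    · rw [(hev _ (by tauto)).2, (hev _ (by tauto)).2]
    · refine Finset.sum_congr ?_ (fun _ _ => rfl)
      ext j
      simp only [Finset.mem_filter, Finset.mem_univ, true_and, Set.mem_ofPred_eq]
      constructor
      · rintro ⟨y, hy, h, hm⟩
        refine ⟨⟨x, y, hx.sm, hy, h⟩, ?_⟩
        rw [← hcnt, count_eq hs hx.sm hy h (fun k => Odd k), hm]
      · rintro ⟨hj, hm⟩
        obtain ⟨y, hy, h⟩ := L4 x hx j hj
        refine ⟨y, hy, h, ?_⟩
        rw [← count_eq hs hx.sm hy h (fun k => Odd k), hcnt, hm]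
  let V : Finset (Fin 4) → C := fun K => ∑ j ∈ Finset.univ.filter (fun j => E j ∧ dset s j = K), v j
  have hV : V (dset s j₀) = v j₀ := by
    have : (Finset.univ.filter (fun j => E j ∧ dset s j = dset s j₀)) = {j₀} := by
      ext j
      simp only [Finset.mem_filter, Finset.mem_univ, true_and, Finset.mem_singleton]
      exact ⟨fun h => hdist j h.1 h.2, by rintro rfl; exact ⟨hE0, rfl⟩⟩
    simp only [V, this, Finset.sum_singleton]
  rw [← hV]
  refine alg_four V (dset s j₀).card ?_ _ rfl
  intro p q hpq m
  rw [← claimA p q hpq m]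
  simp only [V]
  rw [← Finset.sum_fiberwise_of_maps_to (s := Finset.univ.filter (fun j => E j ∧ (dset s j ∩ {p, q}).card = m))
    (t := Finset.univ.filter (fun K : Finset (Fin 4) => K.card = (dset s j₀).card ∧ (K ∩ {p, q}).card = m)) (g := dset s)]
  · refine Finset.sum_congr rfl fun K hK => Finset.sum_congr ?_ (fun _ _ => rfl)
    ext j
    simp only [Finset.mem_filter, Finset.mem_univ, true_and] at hK ⊢
    constructor
    · rintro ⟨h1, rfl⟩; exact ⟨⟨h1, hK.2⟩, rfl⟩
    · rintro ⟨⟨h1, _⟩, h2⟩; exact ⟨h1, h2⟩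
  · intro j hj
    simp only [Finset.mem_filter, Finset.mem_univ, true_and] at hj ⊢
    exact ⟨hcard j hj.1, hj.2⟩

end part4

section part5
open Set

theorem two_tors {a b : AddCircle (1 : ℝ)} (ha : a + a = 0) (hb : b + b = 0) (h : a = 0 ↔ b = 0) : a + b = 0 := by
  have key : ∀ t : AddCircle (1 : ℝ), t + t = 0 → t = 0 ∨ t = ((1 / 2 : ℝ) : AddCircle (1 : ℝ)) := by
    intro t ht
    induction t using QuotientAddGroup.induction_on with
    | H z =>
      have h1 : ((z + z : ℝ) : AddCircle (1 : ℝ)) = 0 := ht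
      rw [AddCircle.coe_eq_zero_iff] at h1
      obtain ⟨n, hn⟩ := h1
      rcases Int.even_or_odd' n with ⟨k, rfl | rfl⟩
      · left
        refine (AddCircle.coe_eq_zero_iff _).2 ⟨k, ?_⟩
        simp at hn ⊢
        linarith
      · right
        have : ((z - 1/2 : ℝ) : AddCircle (1 : ℝ)) = 0 := by
          refine (AddCircle.coe_eq_zero_iff _).2 ⟨k, ?_⟩
          simp at hn ⊢
          linarith
        rw [AddCircle.coe_sub, sub_eq_zero] at this
        exact this
  rcases key a ha with h1 | h1
  · rw [h1, h.1 h1]; simp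
  · rcases key b hb with h2 | h2
    · rw [h2, h.2 h2]; simp
    · rw [h2, ← h1, ha]

theorem sep_char {C : Type*} [AddCommGroup C] (t : C) (ht : t ≠ 0) : ∃ ψ : C →+ AddCircle (1 : ℝ), ψ t ≠ 0 := by
  have : Fact ((0 : ℝ) < 1) := ⟨one_pos⟩
  obtain ⟨k, hk, hk', hk1⟩ : ∃ k : ℕ, 0 < k ∧ k ∣ addOrderOf t ∧ k ≠ 1 := by
    by_cases h : addOrderOf t = 0
    · exact ⟨2, by simp, by simp [h], by simp⟩
    · exact ⟨addOrderOf t, Nat.pos_of_ne_zero h, dvd_rfl, fun h => ht (AddMonoid.addOrderOf_eq_one_iff.1 h)⟩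
  have hc := AddCircle.addOrderOf_period_div (p := (1 : ℝ)) hk
  obtain ⟨ψ, hψ⟩ := extend_hom (zmultiplesHom C t) (zmultiplesHom _ (((1 : ℝ) / k : ℝ) : AddCircle (1 : ℝ))) (by
    intro m hm
    simp only [zmultiplesHom_apply] at hm ⊢
    rw [← addOrderOf_dvd_iff_zsmul_eq_zero] at hm ⊢
    rw [hc]
    exact (Int.natCast_dvd_natCast.2 hk').trans hm)
  refine ⟨ψ, fun h0 => hk1 ?_⟩
  have := hψ 1
  simp only [zmultiplesHom_apply, one_zsmul, h0] at this
  rw [← hc, ← this]; simp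

theorem bohr_color {G : Type u} {H : Type*} [AddCommGroup G] [AddCommGroup H] (K : AddSubgroup G)
    (hK : ∀ x ∈ K, x + x = 0) (f : G → H) (hf : @Continuous G H (bohrTopology G) (bohrTopology H) f)
    (χ : H →+ AddCircle (1 : ℝ)) (t : AddCircle (1 : ℝ)) (ht : t ≠ 0) :
    ∃ (κ : Type u) (_ : Finite κ) (c : K → κ), ∀ a b a' b' : K, c a = c b → c a' = c b' →
      χ (f (a + b + a' + b') - f 0) ≠ t := by
  letI := bohrTopology G
  letI := bohrTopology H
  have hχ : Continuous χ := by
    rw [continuous_iff_le_induced]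
    exact iInf_le _ χ
  have hU : IsOpen (f ⁻¹' (χ ⁻¹' {z | z - χ (f 0) ≠ t})) := by
    refine IsOpen.preimage hf (IsOpen.preimage hχ ?_)
    have : IsOpen ((fun z => z - χ (f 0)) ⁻¹' ({t}ᶜ : Set (AddCircle (1 : ℝ)))) :=
      isOpen_compl_singleton.preimage (by fun_prop)
    exact this
  have h0 : (f ⁻¹' (χ ⁻¹' {z | z - χ (f 0) ≠ t})) ∈ nhds (0 : G) := by
    refine hU.mem_nhds ?_
    simpa using ht.symm
  have hn : nhds (0 : G) = ⨅ η : G →+ AddCircle (1 : ℝ), Filter.comap η (nhds (η 0)) := by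
    change @nhds G (bohrTopology G) 0 = _
    unfold bohrTopology
    rw [nhds_iInf]
    simp only [nhds_induced]
  rw [hn, Filter.mem_iInf] at h0
  obtain ⟨S, hS, V, hV, hSV⟩ := h0
  have := hS.to_subtype
  refine ⟨S → ULift.{u} Prop, inferInstance, fun a η => ⟨η.1 a = 0⟩, ?_⟩
  intro a b a' b' h1 h2 hcon
  have hab : ∀ (a b : K), (fun η : S => (ULift.up (η.1 (a : G) = 0) : ULift.{u} Prop)) = (fun η : S => ⟨η.1 (b : G) = 0⟩) →
      ∀ η : S, η.1 (a : G) + η.1 (b : G) = 0 := by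
    intro a b h η
    have h3 := congrArg ULift.down (congrFun h η)
    simp only [eq_iff_iff] at h3
    refine two_tors ?_ ?_ h3
    · rw [← map_add, hK _ a.2, map_zero]
    · rw [← map_add, hK _ b.2, map_zero]
  have hmem : ((a : G) + b + a' + b') ∈ f ⁻¹' (χ ⁻¹' {z | z - χ (f 0) ≠ t}) := by
    rw [hSV]
    refine mem_iInter.2 fun η => ?_
    obtain ⟨W, hW, hWV⟩ := Filter.mem_comap.1 (hV η)
    apply hWV
    have : η.1 ((a : G) + b + a' + b') = η.1 0 := by
      rw [map_zero, add_assoc, map_add, map_add, map_add, hab a b h1, hab a' b' h2, add_zero]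
    rw [mem_preimage, this]
    exact mem_of_mem_nhds hW
  apply hmem
  rw [← map_sub]
  exact hcon

theorem finsupp_form {I C : Type*} [AddCommGroup C] (F : I →₀ C) : ∃ (n : ℕ) (v : Fin n → C) (s : Fin n → I),
    Function.Injective s ∧ F = ∑ j, Finsupp.single (s j) (v j) := by
  let e := F.support.equivFin.symm
  refine ⟨_, fun j => F (e j), fun j => e j, Subtype.val_injective.comp e.injective, ?_⟩
  rw [e.sum_comp (fun i : F.support => Finsupp.single (i : I) (F i))]
  rw [Finset.sum_coe_sort F.support (fun i => Finsupp.single i (F i))]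
  exact (Finsupp.sum_single F).symm

theorem common_eight (x y : Fin 4 → ℕ) : ∃ (z : Fin 8 → ℕ) (α β : Fin 4 → Fin 8),
    StrictMono z ∧ x = z ∘ α ∧ y = z ∘ β := by
  classical
  obtain ⟨A, hA, hA'⟩ := Infinite.exists_superset_card_eq (Finset.univ.image x ∪ Finset.univ.image y) 8 (by
    refine (Finset.card_union_le _ _).trans ?_
    have h1 := Finset.card_image_le (s := Finset.univ) (f := x)
    have h2 := Finset.card_image_le (s := Finset.univ) (f := y)
    simp at h1 h2
    omega)
  have hmem : ∀ a ∈ A, ∃ i, A.orderEmbOfFin hA' i = a := by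
    intro a ha
    have : a ∈ Set.range (A.orderEmbOfFin hA') := by
      rw [Finset.range_orderEmbOfFin]; exact ha
    exact this
  choose α hα using fun i => hmem (x i) (hA (Finset.mem_union_left _ (Finset.mem_image_of_mem _ (Finset.mem_univ i))))
  choose β hβ using fun i => hmem (y i) (hA (Finset.mem_union_right _ (Finset.mem_image_of_mem _ (Finset.mem_univ i))))
  exact ⟨A.orderEmbOfFin hA', α, β, (A.orderEmbOfFin hA').strictMono, funext fun i => (hα i).symm, funext fun i => (hβ i).symm⟩

theorem main_aux {G : Type u} {H : Type*} [AddCommGroup G] [AddCommGroup H] (K : AddSubgroup G)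
    (hK : ∀ x ∈ K, x + x = 0)
    (hcard : (2 : Cardinal.{u}) ^ ((2 : Cardinal.{u}) ^ Cardinal.continuum.{u}) < Cardinal.mk K)
    (f : G → H) (hf : @Continuous G H (bohrTopology G) (bohrTopology H) f) :
    ∃ g : ℕ → K, Function.Injective g ∧ ∀ x : Fin 4 → ℕ, StrictMono x →
      (f (∑ i, (g (x i) : G)) - f 0) + (f (∑ i, (g (x i) : G)) - f 0) = 0 := by
  classical
  obtain ⟨φ, hφ⟩ := embed H
  let F : (Fin 4 → K) → H := fun x => f (∑ i, (x i : G)) - f 0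
  choose n v s hsinj hsF using fun x : Fin 4 → K => finsupp_form (φ (F x))
  have : Countable (Σ n : ℕ, (Fin n → CC)) := inferInstance
  obtain ⟨enc, henc⟩ := this.exists_injective_nat
  obtain ⟨g, hg, k, hk⟩ := er_four hcard (fun x => enc ⟨n x, v x⟩)
  let x0 : Fin 4 → ℕ := fun i => i
  have hx0 : StrictMono x0 := fun a b h => h
  obtain ⟨N, V, hNV⟩ : ∃ (N : ℕ) (V : Fin N → CC), ∀ x : Fin 4 → ℕ, StrictMono x →
      (⟨n (g ∘ x), v (g ∘ x)⟩ : Σ n : ℕ, (Fin n → CC)) = ⟨N, V⟩ :=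
    ⟨_, _, fun x hx => henc ((hk x hx).trans (hk x0 hx0).symm)⟩
  have hform : ∀ x : Fin 4 → ℕ, ∃ s : Fin N → H, StrictMono x → Function.Injective s ∧
      φ (F (g ∘ x)) = ∑ j, Finsupp.single (s j) (V j) := by
    intro x
    by_cases hx : StrictMono x
    · have aux : ∀ (A B : Σ n : ℕ, (Fin n → CC)), A = B → (∃ s : Fin A.1 → H, Function.Injective s ∧
          φ (F (g ∘ x)) = ∑ j, Finsupp.single (s j) (A.2 j)) → (∃ s : Fin B.1 → H, Function.Injective s ∧
          φ (F (g ∘ x)) = ∑ j, Finsupp.single (s j) (B.2 j)) := by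
        rintro A B rfl h; exact h
      obtain ⟨s', h⟩ := aux _ _ (hNV x hx) ⟨s (g ∘ x), hsinj _, hsF _⟩
      exact ⟨s', fun _ => h⟩
    · exact ⟨fun _ => 0, fun h => absurd h hx⟩
  choose s0 hs0 using hform
  obtain ⟨h, hh, k', hk'⟩ := ramsey_inf 8 (fun z : Fin 8 → ℕ =>
    (fun p : Fin N × Fin N × (Fin 4 → Fin 8) × (Fin 4 → Fin 8) => s0 (z ∘ p.2.2.1) p.1 = s0 (z ∘ p.2.2.2) p.2.1))
  have hom : Homog (fun x => s0 (h ∘ x)) := by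
    intro σ hσ x y hx hy j j'
    obtain ⟨z, α, β, hz, rfl, rfl⟩ := common_eight x y
    have e1 := congrFun (hk' z hz) (j, j', α, β)
    have e2 := congrFun (hk' (σ ∘ z) (hσ.comp hz)) (j, j', α, β)
    exact iff_of_eq (e1.trans e2.symm)
  have hcanon := canon (fun x => s0 (h ∘ x)) V (fun x hx => (hs0 _ (hh.comp hx)).1) hom (by
    intro J t ht
    obtain ⟨ψ, hψ⟩ := sep_char t ht
    let χ' : (H →₀ CC) →+ AddCircle (1 : ℝ) := Finsupp.liftAddHom (fun i => if i ∈ J then ψ else 0)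
    obtain ⟨κ, hκ, c, hc⟩ := bohr_color K hK f hf (χ'.comp φ) (ψ t) hψ
    refine ⟨κ, hκ, fun m => c (g (h m)), ?_⟩
    intro x hx π h1 h2 hsum
    refine hc _ _ _ _ h1 h2 ?_
    have e1 : (g (h (x (π 0))) : G) + g (h (x (π 1))) + g (h (x (π 2))) + g (h (x (π 3))) =
        ∑ i, ((g ∘ (h ∘ x)) i : G) := by
      rw [← Equiv.sum_comp π, Fin.sum_univ_four]; rfl
    rw [e1]
    change χ' (φ (F (g ∘ (h ∘ x)))) = ψ t
    rw [(hs0 _ (hh.comp hx)).2, map_sum, ← hsum, map_sum, Finset.sum_filter]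
    refine Finset.sum_congr rfl fun j _ => ?_
    simp only [χ', Finsupp.liftAddHom_apply_single]
    split_ifs <;> simp)
  refine ⟨g ∘ h, hg.comp hh.injective, fun x hx => hφ ?_⟩
  change φ (F (g ∘ (h ∘ x)) + F (g ∘ (h ∘ x))) = φ 0
  rw [map_add, (hs0 _ (hh.comp hx)).2, ← Finset.sum_add_distrib, map_zero]
  refine Finset.sum_eq_zero fun j _ => ?_
  rw [← Finsupp.single_add, hcanon j, Finsupp.single_zero]

end part5

end BohrAux

/-- If `G` contains a subgroup of exponent 2 of size `> 2^(2^𝔠)` and `H` contains no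
infinite subgroup of exponent 2, then there is no continuous finite-to-one map
`f : G^# → H^#`. -/
theorem bohr_no_continuous_finite_to_one (G H : Type*) [AddCommGroup G] [AddCommGroup H]
    (hG : ∃ K : AddSubgroup G, (∀ x ∈ K, x + x = 0) ∧
      (2 : Cardinal) ^ ((2 : Cardinal) ^ Cardinal.continuum) < Cardinal.mk K)
    (hH : ∀ K : AddSubgroup H, (∀ x ∈ K, x + x = 0) → (K : Set H).Finite) :
    letI := bohrTopology G
    letI := bohrTopology H
    ¬ ∃ f : G → H, Continuous f ∧ ∀ y : H, (f ⁻¹' {y}).Finite := by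
  rintro ⟨f, hf, hfib⟩
  obtain ⟨K, hK, hcard⟩ := hG
  obtain ⟨g, hg, hgx⟩ := BohrAux.main_aux K hK hcard f hf
  let T : AddSubgroup H :=
    { carrier := {h | h + h = 0}
      zero_mem' := by simp
      add_mem' := by
        intro a b ha hb
        change a + b + (a + b) = 0
        rw [add_add_add_comm]
        rw [show a + a = 0 from ha, show b + b = 0 from hb, add_zero]
      neg_mem' := by
        intro a ha
        change -a + -a = 0
        rw [← neg_add, show a + a = 0 from ha, neg_zero] }
  have hT : (T : Set H).Finite := hH T (fun x hx => hx)
  have hT' : ((fun h => h + f 0) '' (T : Set H)).Finite := hT.image _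
  have hfin := hT'.preimage' (f := f) (fun b _ => hfib b)
  refine Set.infinite_of_injective_forall_mem
    (f := fun m : ℕ => (g 0 : G) + g 1 + g 2 + g (m + 3)) ?_ ?_ hfin
  · intro a b hab
    have h1 := add_left_cancel hab
    have h2 := hg (Subtype.ext h1)
    omega
  · intro m
    have hx : StrictMono ![0, 1, 2, m + 3] := by
      refine Fin.strictMono_iff_lt_succ.2 fun i => ?_
      fin_cases i <;> simp
    have h1 := hgx _ hx
    rw [Fin.sum_univ_four] at h1
    refine ⟨_, h1, ?_⟩
    simp
end
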